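/- Let n ≥ 2, d ∈ ℝ and k̃ ∈ S^{d−1}_{1,0}(ℝ^{n−1}×ℝ^{n−1}, 𝒮(ℝ̄₊)). Then there exists a smooth function p̃(x′,x_n,ξ′) on ℝ^{n−1}×ℝ×ℝ^{n−1} such that: p̃(x′,x_n,ξ′) = k̃(x′,x_n,ξ′) for all x_n ≥ 0; for each fixed (x′,ξ′) the function x_n ↦ p̃(x′,x_n,ξ′) is a Schwartz function on ℝ; and the function a(x,ξ) := ∫_ℝ e^{−i t ξ_n} p̃(x′,t,ξ′) dt for x = (x′,x_n) ∈ ℝⁿ, ξ = (ξ′,ξ_n) ∈ ℝⁿ (independent of x_n) belongs to S^{d−1}_{1,0}(ℝⁿ×ℝⁿ) and satisfies the uniform two-sided transmission condition at x_n = 0. -/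

import Mathlib

/-!
The extension of the symbol-kernel across `t = 0` is Seeley's reflection: for `t < 0`,
`pt(x', t, ξ') = ∑ⱼ cⱼ k(x', -8ʲ t, ξ')`, with rapidly decreasing coefficients satisfying
`∑ⱼ cⱼ (-8ʲ)ⁿ = 1` for every `n` (`exists_seeley`). The moment conditions make all derivatives
match at `t = 0`, and since the reflections only dilate `t` by factors at least `1`, every mixed
derivative of `pt` satisfies on the whole line the estimates which the corresponding derivative of
`k` satisfies on the half-line (`exists_ext`). To handle all mixed derivatives at once they are
indexed by words `w` in the coordinate directions, so that `pt` comes with a family `P w` of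
continuous functions, closed under partial differentiation. The hypothesis on `k` controls
only derivatives taken in one fixed order; symmetry of second derivatives (`Wd_perm`) extends this
to all words (`Wd_bound`).

The derivatives of the symbol `a(x, ξ) = ∫ e^{-i t ξ_n} pt(x', t, ξ') dt` are, up to powers of
`-i`, either zero (if `x_n` is differentiated) or Fourier transforms in `t` of weighted kernels
`(-i t)^q P_w(x', t, ξ')` (`AF_hasDerivAt`, `symD_AF`). Such a kernel is bounded by
`C ⟨ξ'⟩^e / (1 + (⟨ξ'⟩ t)²)`, which gives an `L¹` bound and hence the estimate of its Fourier
transform by a power of `⟨ξ'⟩`; integration by parts trades powers of `ξ_n` for powers of `⟨ξ'⟩`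
(`Ak_decay`), and the two together give the estimate in terms of `⟨ξ⟩` (`Ak_symbol`).

For the transmission condition, the inverse Fourier transform in `ξ_n` of a derivative of `a` is by
Fourier inversion (`integral_pF1_mul_pFinv1`) a multiple of the weighted kernel, which is a Schwartz
function of `t` with seminorms bounded uniformly in `x'` for fixed `ξ'` (`gk_deriv_bound`).
-/

open MeasureTheory Filter Complex
open scoped ENNReal NNReal Real BigOperators Topology

noncomputable section

/-- `ℝ^m`, with its (sup-normed) product structure; the Lebesgue measure is the
product measure. -/
abbrev Eu (m : ℕ) : Type := Fin m → ℝ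

/-- Tempered distributions on `ℝ^m`. -/
abbrev TD (m : ℕ) := SchwartzMap (Eu m) ℂ →L[ℂ] ℂ

/-- The dot product `x · ξ = ∑ xᵢ ξᵢ`. -/
def dotp {m : ℕ} (x ξ : Eu m) : ℝ := ∑ i, x i * ξ i

/-- The euclidean norm `|x|`. -/
def eun {m : ℕ} (x : Eu m) : ℝ := Real.sqrt (∑ i, x i ^ 2)

/-- The japanese bracket `⟨ξ⟩ = (1 + |ξ|²)^(1/2)`. -/
def jap {m : ℕ} (ξ : Eu m) : ℝ := Real.sqrt (1 + ∑ i, ξ i ^ 2)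

/-- The Fourier transform `ℱf(ξ) = ∫ e^{-i x·ξ} f(x) dx` (paper convention). -/
def pF {m : ℕ} (f : Eu m → ℂ) (ξ : Eu m) : ℂ :=
  ∫ x : Eu m, Complex.exp (-(Complex.I * (dotp x ξ : ℂ))) * f x

/-- The inverse Fourier transform `(2π)^{-m} ∫ e^{i x·ξ} f(ξ) dξ`. -/
def pFinv {m : ℕ} (f : Eu m → ℂ) (x : Eu m) : ℂ :=
  (((2 * Real.pi) ^ m : ℝ)⁻¹) • ∫ ξ : Eu m, Complex.exp (Complex.I * (dotp x ξ : ℂ)) * f ξ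

/-- One-dimensional Fourier transform. -/
def pF1 (f : ℝ → ℂ) (τ : ℝ) : ℂ :=
  ∫ t : ℝ, Complex.exp (-(Complex.I * ((t * τ : ℝ) : ℂ))) * f t

/-- One-dimensional inverse Fourier transform. -/
def pFinv1 (f : ℝ → ℂ) (t : ℝ) : ℂ :=
  ((2 * Real.pi)⁻¹ : ℝ) • ∫ τ : ℝ, Complex.exp (Complex.I * ((t * τ : ℝ) : ℂ)) * f τ

/-- `ℓ_q`-norm (`0 < q ≤ ∞`) of a sequence of extended nonnegative reals. -/
def ellqNorm (q : ℝ≥0∞) (b : ℕ → ℝ≥0∞) : ℝ≥0∞ :=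
  if q = ∞ then ⨆ j, b j else (∑' j, b j ^ q.toReal) ^ (1 / q.toReal)

/-- The weight `2^{s j}` as an extended nonnegative real. -/
def tw (s : ℝ) (j : ℕ) : ℝ≥0∞ := ENNReal.ofReal ((2 : ℝ) ^ (s * (j : ℝ)))

/-- `1/p ∈ ℝ` for `p ∈ (0,∞]`. -/
def iv (p : ℝ≥0∞) : ℝ := p⁻¹.toReal

/-- An admissible Littlewood–Paley generating function `Ψ`. -/
def GoodPsi (Ψ : ℝ → ℝ) : Prop :=
  ContDiff ℝ (⊤ : ℕ∞) Ψ ∧ (∀ t : ℝ, t ≤ 11 / 10 → Ψ t = 1) ∧ (∀ t : ℝ, 13 / 10 ≤ t → Ψ t = 0)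

/-- The `j`-th Littlewood–Paley symbol `Φ_j(ξ) = Ψ(2^{-j}|ξ|) − Ψ(2^{1-j}|ξ|)` (with
`Ψ_{-1} = 0`). -/
def LPsym (Ψ : ℝ → ℝ) {m : ℕ} (j : ℕ) (ξ : Eu m) : ℝ :=
  Ψ ((2 : ℝ) ^ (-(j : ℝ)) * eun ξ) - (if j = 0 then 0 else Ψ ((2 : ℝ) ^ (1 - (j : ℝ)) * eun ξ))

/-- `Φs` is the Littlewood–Paley partition of unity built from `Ψ`, realised as a family
of Schwartz functions. -/
def IsLP (Ψ : ℝ → ℝ) {m : ℕ} (Φs : ℕ → SchwartzMap (Eu m) ℂ) : Prop :=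
  ∀ j ξ, Φs j ξ = (LPsym Ψ j ξ : ℂ)

/-- The tempered distribution `T` is represented by the function `g`. -/
def Represents {m : ℕ} (T : TD m) (g : Eu m → ℂ) : Prop :=
  ∀ φ : SchwartzMap (Eu m) ℂ, T φ = ∫ x, g x * φ x

/-- `g` is (the continuous function representing) the Littlewood–Paley piece
`ℱ^{-1}(Φ_j ℱu)` of the tempered distribution `u`:  for every Schwartz `φ`, writing
`ψ = ℱ^{-1}φ` and `χ = ℱ(Φ_j ψ)` (as Schwartz functions), one has `⟨u, χ⟩ = ∫ g φ`. -/
def IsLPpiece {m : ℕ} (Φj : SchwartzMap (Eu m) ℂ) (u : TD m) (g : Eu m → ℂ) : Prop :=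
  Continuous g ∧
    ∀ φ ψ χ : SchwartzMap (Eu m) ℂ,
      (∀ x, ψ x = pFinv (fun y => φ y) x) →
      (∀ ξ, χ ξ = pF (fun η => Φj η * ψ η) ξ) →
      u χ = ∫ x, g x * φ x

open Classical in
/-- The Littlewood–Paley piece `ℱ^{-1}(Φ_j ℱu)` of a tempered distribution, as a
function (via choice of the continuous representative). -/
def LPfun {m : ℕ} (Φj : SchwartzMap (Eu m) ℂ) (u : TD m) : Eu m → ℂ :=
  if h : ∃ g, IsLPpiece Φj u g then h.choose else 0

/-- Besov quasi-norm of a sequence of (Littlewood–Paley) functions. -/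
def besovNormSeq {m : ℕ} (s : ℝ) (p q : ℝ≥0∞) (g : ℕ → Eu m → ℂ) : ℝ≥0∞ :=
  ellqNorm q fun j => tw s j * eLpNorm (g j) p volume

/-- Triebel–Lizorkin quasi-norm of a sequence of (Littlewood–Paley) functions. -/
def tlNormSeq {m : ℕ} (s : ℝ) (p q : ℝ≥0∞) (g : ℕ → Eu m → ℂ) : ℝ≥0∞ :=
  (∫⁻ x, (ellqNorm q fun j => tw s j * (‖g j x‖₊ : ℝ≥0∞)) ^ p.toReal ∂volume) ^ (1 / p.toReal)

/-- Besov quasi-norm `‖u‖_{B^s_{p,q}}` of a tempered distribution. -/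
def besovNormD {m : ℕ} (Φs : ℕ → SchwartzMap (Eu m) ℂ) (s : ℝ) (p q : ℝ≥0∞) (u : TD m) :
    ℝ≥0∞ :=
  besovNormSeq s p q fun j => LPfun (Φs j) u

/-- Triebel–Lizorkin quasi-norm `‖u‖_{F^s_{p,q}}` of a tempered distribution. -/
def tlNormD {m : ℕ} (Φs : ℕ → SchwartzMap (Eu m) ℂ) (s : ℝ) (p q : ℝ≥0∞) (u : TD m) :
    ℝ≥0∞ :=
  tlNormSeq s p q fun j => LPfun (Φs j) u

/-- The open upper half-space `ℝ^{m+1}_+ = {x : x_n > 0}`. -/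
def upperH (m : ℕ) : Set (Eu (m + 1)) := {x | 0 < x (Fin.last m)}

/-- `w ∈ 𝒮'(ℝ^{m+1})` agrees with the function `f` on the open half-space `ℝ^{m+1}_+`. -/
def RestrictsTo {m : ℕ} (w : TD (m + 1)) (f : Eu (m + 1) → ℂ) : Prop :=
  ∀ φ : SchwartzMap (Eu (m + 1)) ℂ, HasCompactSupport (φ : Eu (m + 1) → ℂ) →
    tsupport (φ : Eu (m + 1) → ℂ) ⊆ upperH m → w φ = ∫ x, f x * φ x

/-- Two tempered distributions agree on the open upper half-space. -/
def AgreeOnUpper {m : ℕ} (w v : TD (m + 1)) : Prop :=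
  ∀ φ : SchwartzMap (Eu (m + 1)) ℂ, HasCompactSupport (φ : Eu (m + 1) → ℂ) →
    tsupport (φ : Eu (m + 1) → ℂ) ⊆ upperH m → w φ = v φ

/-- `‖f‖_{B^s_{p,q}(ℝ̄^{m+1}_+)}`: infimum of the Besov norms of all distributional
extensions of (the restriction to the half-space of) the function `f`. -/
def bHalfNormF {m : ℕ} (Φs : ℕ → SchwartzMap (Eu (m + 1)) ℂ) (s : ℝ) (p q : ℝ≥0∞)
    (f : Eu (m + 1) → ℂ) : ℝ≥0∞ :=
  ⨅ (w : TD (m + 1)) (_ : RestrictsTo w f), besovNormD Φs s p q w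

/-- `‖f‖_{F^s_{p,q}(ℝ̄^{m+1}_+)}`. -/
def tlHalfNormF {m : ℕ} (Φs : ℕ → SchwartzMap (Eu (m + 1)) ℂ) (s : ℝ) (p q : ℝ≥0∞)
    (f : Eu (m + 1) → ℂ) : ℝ≥0∞ :=
  ⨅ (w : TD (m + 1)) (_ : RestrictsTo w f), tlNormD Φs s p q w

/-- `‖v‖_{B^s_{p,q}(ℝ̄^{m+1}_+)}` for a tempered distribution `v`. -/
def bHalfNormD {m : ℕ} (Φs : ℕ → SchwartzMap (Eu (m + 1)) ℂ) (s : ℝ) (p q : ℝ≥0∞)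
    (v : TD (m + 1)) : ℝ≥0∞ :=
  ⨅ (w : TD (m + 1)) (_ : AgreeOnUpper w v), besovNormD Φs s p q w

/-- `‖v‖_{F^s_{p,q}(ℝ̄^{m+1}_+)}` for a tempered distribution `v`. -/
def tlHalfNormD {m : ℕ} (Φs : ℕ → SchwartzMap (Eu (m + 1)) ℂ) (s : ℝ) (p q : ℝ≥0∞)
    (v : TD (m + 1)) : ℝ≥0∞ :=
  ⨅ (w : TD (m + 1)) (_ : AgreeOnUpper w v), tlNormD Φs s p q w

/-- Partial derivative in the `i`-th coordinate. -/
def cDeriv {k : ℕ} (i : Fin k) (f : Eu k → ℂ) : Eu k → ℂ :=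
  fun x => deriv (fun t => f (Function.update x i t)) (x i)

/-- Iterated partial derivative `∂^α` for a multi-index `α`. -/
def mDeriv {k : ℕ} (α : Fin k → ℕ) (f : Eu k → ℂ) : Eu k → ℂ :=
  (List.finRange k).foldr (fun i g => (cDeriv i)^[α i] g) f

/-- Length `|α| = ∑ αᵢ` of a multi-index. -/
def degS {k : ℕ} (α : Fin k → ℕ) : ℕ := ∑ i, α i

/-- `D^α = (-i)^{|α|} ∂^α`. -/
def mD {k : ℕ} (α : Fin k → ℕ) (f : Eu k → ℂ) : Eu k → ℂ :=
  fun x => (-Complex.I) ^ degS α * mDeriv α f x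

/-- Monomial `x^α`. -/
def monom {k : ℕ} (α : Fin k → ℕ) (x : Eu k) : ℂ := ∏ i, (x i : ℂ) ^ α i

/-- `D^β_x D^α_ξ a(x, ξ)` for a symbol `a`. -/
def symD {k : ℕ} (α β : Fin k → ℕ) (a : Eu k → Eu k → ℂ) (x ξ : Eu k) : ℂ :=
  mD β (fun y => mD α (a y) ξ) x

/-- The Hörmander class `S^d_{1,0}(ℝ^k × ℝ^k)` of uniformly estimated symbols. -/
def IsSymbol {k : ℕ} (d : ℝ) (a : Eu k → Eu k → ℂ) : Prop :=
  ContDiff ℝ (⊤ : ℕ∞) (fun z : Eu k × Eu k => a z.1 z.2) ∧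
    ∀ α β : Fin k → ℕ, ∃ C : ℝ, ∀ x ξ, ‖symD α β a x ξ‖ ≤ C * jap ξ ^ (d - (degS α : ℝ))

/-- `k` is the inverse Fourier transform in `ξ_n` of `ξ_n ↦ D^α_ξ D^β_x a(x',0,ξ',ξ_n)`
away from `z_n = 0`, smooth there. -/
def TCkernel {m : ℕ} (a : Eu (m + 1) → Eu (m + 1) → ℂ) (α β : Fin (m + 1) → ℕ)
    (k : Eu m → ℝ → Eu m → ℂ) : Prop :=
  (∀ x' ξ', ContDiffOn ℝ (⊤ : ℕ∞) (fun t => k x' t ξ') {t : ℝ | t ≠ 0}) ∧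
    ∀ (x' ξ' : Eu m) (φ : ℝ → ℂ), ContDiff ℝ (⊤ : ℕ∞) φ → HasCompactSupport φ →
      tsupport φ ⊆ {t : ℝ | t ≠ 0} →
      (∫ τ : ℝ, symD α β a (Fin.snoc x' 0) (Fin.snoc ξ' τ) * pFinv1 φ τ) =
        ∫ t : ℝ, k x' t ξ' * φ t

/-- The uniform two-sided transmission condition at `x_n = 0`. -/
def HasUTTC {m : ℕ} (a : Eu (m + 1) → Eu (m + 1) → ℂ) : Prop :=
  ∀ α β : Fin (m + 1) → ℕ, ∃ k : Eu m → ℝ → Eu m → ℂ, TCkernel a α β k ∧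
    ∀ (l mm : ℕ) (ξ' : Eu m), ∃ C : ℝ, ∀ (x' : Eu m) (t : ℝ), t ≠ 0 →
      ‖(t : ℂ) ^ l * iteratedDeriv mm (fun u => k x' u ξ') t‖ ≤ C

/-- `t^l D^m_t D^{α'}_{ξ'} D^{β'}_{x'} k̃(x', t, ξ')`, the `t`-derivatives being taken
within `[0,∞)`. -/
def pkDeriv {m : ℕ} (α' β' : Fin m → ℕ) (l mm : ℕ) (k : Eu m → ℝ → Eu m → ℂ)
    (x' : Eu m) (t : ℝ) (ξ' : Eu m) : ℂ :=
  (t : ℂ) ^ l *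
    iteratedDerivWithin mm
      (fun u => mDeriv β' (fun y => mDeriv α' (fun η => k y u η) ξ') x') (Set.Ici 0) t

/-- The seminorm `sup ⟨ξ'⟩^{-(μ+1-|α'|-l+m)} |t^l D^m_t D^{α'}_{ξ'} D^{β'}_{x'} k̃|` of a
Poisson/trace symbol-kernel. -/
def pkSemiE {m : ℕ} (μ : ℝ) (α' β' : Fin m → ℕ) (l mm : ℕ) (k : Eu m → ℝ → Eu m → ℂ) :
    ℝ≥0∞ :=
  ⨆ (x' : Eu m) (ξ' : Eu m) (t : Set.Ici (0 : ℝ)),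
    ENNReal.ofReal
      (jap ξ' ^ (-(μ + 1 - (degS α' : ℝ) - (l : ℝ) + (mm : ℝ))) *
        ‖pkDeriv α' β' l mm k x' t ξ'‖)

/-- Membership in the symbol-kernel class `S^μ_{1,0}(ℝ^m × ℝ^m, 𝒮(ℝ̄₊))`. -/
def InPK {m : ℕ} (μ : ℝ) (k : Eu m → ℝ → Eu m → ℂ) : Prop :=
  ContDiffOn ℝ (⊤ : ℕ∞) (fun z : (Eu m × ℝ) × Eu m => k z.1.1 z.1.2 z.2) {z | 0 ≤ z.1.2} ∧
    ∀ (α' β' : Fin m → ℕ) (l mm : ℕ), pkSemiE μ α' β' l mm k ≠ ∞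

/-- `‖k̃‖_{(N)}`: maximum of the symbol-kernel seminorms over all indices `≤ N`. -/
def pkNormN {m : ℕ} (μ : ℝ) (N : ℕ) (k : Eu m → ℝ → Eu m → ℂ) : ℝ≥0∞ :=
  ⨆ (α' : Fin m → ℕ) (_ : degS α' ≤ N) (β' : Fin m → ℕ) (_ : degS β' ≤ N)
    (l : ℕ) (_ : l ≤ N) (mm : ℕ) (_ : mm ≤ N), pkSemiE μ α' β' l mm k

/-- `x_n^l D^m_{x_n} y_n^{l'} D^{m'}_{y_n} D^{α'}_{ξ'} D^{β'}_{x'} g̃`, the normal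
derivatives being taken within `[0,∞)`. -/
def sgDeriv {m : ℕ} (α' β' : Fin m → ℕ) (l mm l' mm' : ℕ)
    (g : Eu m → ℝ → ℝ → Eu m → ℂ) (x' : Eu m) (s t : ℝ) (ξ' : Eu m) : ℂ :=
  (s : ℂ) ^ l * (t : ℂ) ^ l' *
    iteratedDerivWithin mm
      (fun u =>
        iteratedDerivWithin mm'
          (fun v => mDeriv β' (fun y => mDeriv α' (fun η => g y u v η) ξ') x')
          (Set.Ici 0) t)
      (Set.Ici 0) s

/-- Singular Green symbol-kernel seminorm. -/
def sgSemiE {m : ℕ} (d : ℝ) (α' β' : Fin m → ℕ) (l mm l' mm' : ℕ)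
    (g : Eu m → ℝ → ℝ → Eu m → ℂ) : ℝ≥0∞ :=
  ⨆ (x' : Eu m) (ξ' : Eu m) (s : Set.Ici (0 : ℝ)) (t : Set.Ici (0 : ℝ)),
    ENNReal.ofReal
      (jap ξ' ^
          (-(d + 1 - (degS α' : ℝ) - (l : ℝ) + (mm : ℝ) - (l' : ℝ) + (mm' : ℝ))) *
        ‖sgDeriv α' β' l mm l' mm' g x' s t ξ'‖)

/-- Membership in the singular Green symbol-kernel class
`S^{d-1}_{1,0}(ℝ^m × ℝ^m, 𝒮(ℝ̄²₊₊))` (for operators of order `d`). -/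
def InSG {m : ℕ} (d : ℝ) (g : Eu m → ℝ → ℝ → Eu m → ℂ) : Prop :=
  ContDiffOn ℝ (⊤ : ℕ∞) (fun z : ((Eu m × ℝ) × ℝ) × Eu m => g z.1.1.1 z.1.1.2 z.1.2 z.2)
      {z | 0 ≤ z.1.1.2 ∧ 0 ≤ z.1.2} ∧
    ∀ (α' β' : Fin m → ℕ) (l mm l' mm' : ℕ), sgSemiE d α' β' l mm l' mm' g ≠ ∞

/-- `‖g̃‖_{(N)}`. -/
def sgNormN {m : ℕ} (d : ℝ) (N : ℕ) (g : Eu m → ℝ → ℝ → Eu m → ℂ) : ℝ≥0∞ :=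
  ⨆ (α' : Fin m → ℕ) (_ : degS α' ≤ N) (β' : Fin m → ℕ) (_ : degS β' ≤ N)
    (l : ℕ) (_ : l ≤ N) (mm : ℕ) (_ : mm ≤ N) (l' : ℕ) (_ : l' ≤ N) (mm' : ℕ)
    (_ : mm' ≤ N), sgSemiE d α' β' l mm l' mm' g

/-- The Poisson operator `OPK(k̃)v(x', x_n) = (2π)^{1-n} ∫ e^{i x'·ξ'} k̃(x',x_n,ξ') ℱv(ξ') dξ'`. -/
def OPK {m : ℕ} (k : Eu m → ℝ → Eu m → ℂ) (v : Eu m → ℂ) : Eu (m + 1) → ℂ :=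
  fun x =>
    (((2 * Real.pi) ^ m : ℝ)⁻¹) •
      ∫ ξ' : Eu m,
        Complex.exp (Complex.I * (dotp (Fin.init x) ξ' : ℂ)) *
          (k (Fin.init x) (x (Fin.last m)) ξ' * pF v ξ')

/-- The partial Fourier transform `ú(ξ', y_n)` of `u(y', y_n)` in `y'`. -/
def hatu {m : ℕ} (u : Eu (m + 1) → ℂ) (ξ' : Eu m) (t : ℝ) : ℂ :=
  ∫ y' : Eu m, Complex.exp (-(Complex.I * (dotp y' ξ' : ℂ))) * u (Fin.snoc y' t)

/-- The class-0 trace operator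
`OPT(t̃)u(x') = (2π)^{1-n} ∫∫ e^{i x'·ξ'} t̃(x',y_n,ξ') ú(ξ',y_n) dy_n dξ'`. -/
def OPT {m : ℕ} (tk : Eu m → ℝ → Eu m → ℂ) (u : Eu (m + 1) → ℂ) : Eu m → ℂ :=
  fun x' =>
    (((2 * Real.pi) ^ m : ℝ)⁻¹) •
      ∫ ξ' : Eu m, ∫ t in Set.Ioi (0 : ℝ),
        Complex.exp (Complex.I * (dotp x' ξ' : ℂ)) * (tk x' t ξ' * hatu u ξ' t)

/-- The class-0 singular Green operator
`OPG(g̃)u(x',x_n) = (2π)^{1-n} ∫∫ e^{i x'·ξ'} g̃(x',x_n,y_n,ξ') ú(ξ',y_n) dy_n dξ'`. -/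
def OPG {m : ℕ} (g : Eu m → ℝ → ℝ → Eu m → ℂ) (u : Eu (m + 1) → ℂ) : Eu (m + 1) → ℂ :=
  fun x =>
    (((2 * Real.pi) ^ m : ℝ)⁻¹) •
      ∫ ξ' : Eu m, ∫ t in Set.Ioi (0 : ℝ),
        Complex.exp (Complex.I * (dotp (Fin.init x) ξ' : ℂ)) *
          (g (Fin.init x) (x (Fin.last m)) t ξ' * hatu u ξ' t)

/-- Half-space multi-index derivative: the `x_n`-derivatives are taken within `[0,∞)`,
the tangential ones in the full space. -/
def hDeriv {m : ℕ} (β : Fin (m + 1) → ℕ) (f : Eu (m + 1) → ℂ) (x : Eu (m + 1)) : ℂ :=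
  iteratedDerivWithin (β (Fin.last m))
    (fun t =>
      mDeriv (fun i : Fin m => β i.castSucc) (fun y : Eu m => f (Fin.snoc y t))
        (Fin.init x))
    (Set.Ici 0) (x (Fin.last m))

/-- The Schwartz seminorm `‖u‖_{𝒮,N} = max_{|γ|,|δ| ≤ N} sup |y^γ D^δ u|`. -/
def swSemi {k : ℕ} (N : ℕ) (u : Eu k → ℂ) : ℝ≥0∞ :=
  ⨆ (γ : Fin k → ℕ) (_ : degS γ ≤ N) (δ : Fin k → ℕ) (_ : degS δ ≤ N) (y : Eu k),
    ENNReal.ofReal ‖monom γ y * mDeriv δ u y‖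

/-- `supp ℱf ⊆ S` for a (polynomially bounded, continuous) function `f`:  the pairing
`⟨ℱf, φ⟩ = ∫ f ℱφ` vanishes for every Schwartz `φ` with support disjoint from `S`. -/
def FsuppIn {m : ℕ} (f : Eu m → ℂ) (S : Set (Eu m)) : Prop :=
  ∀ φ : SchwartzMap (Eu m) ℂ, Disjoint (tsupport (φ : Eu m → ℂ)) S →
    (∫ x, f x * pF (fun y => φ y) x) = 0

/-- The one-sided trace `γ_j v (x') = ((-i ∂_{x_n})^j v)(x', 0)`. -/
def traceJ {m : ℕ} (j : ℕ) (v : Eu (m + 1) → ℂ) (x' : Eu m) : ℂ :=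
  (-Complex.I) ^ j * iteratedDeriv j (fun t => v (Fin.snoc x' t)) 0

/-! ### Seeley coefficients -/

/-- Taylor coefficients of the entire function `F` with `F(0) = 1` and `F(8z) = (1 - 8z) F(z)`.
It vanishes at `1/8`, hence at all `8ⁿ`, `n ≥ 0`. -/
def seeE : ℕ → ℝ
  | 0 => 1
  | k + 1 => -8 * seeE k / (8 ^ (k + 1) - 1)

lemma seeE_succ (k : ℕ) : seeE (k + 1) * 8 ^ (k + 1) = seeE (k + 1) - 8 * seeE k := by
  have h : (1 : ℝ) < 8 ^ (k + 1) := one_lt_pow₀ (by norm_num) (by omega)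
  have h' : (8 : ℝ) ^ (k + 1) - 1 ≠ 0 := by linarith
  have : seeE (k + 1) = -8 * seeE k / (8 ^ (k + 1) - 1) := rfl
  rw [this]
  field_simp
  ring

lemma seeE_abs (k : ℕ) : |seeE (k + 1)| = 8 * |seeE k| / (8 ^ (k + 1) - 1) := by
  have h : (1 : ℝ) < 8 ^ (k + 1) := one_lt_pow₀ (by norm_num) (by omega)
  have : seeE (k + 1) = -8 * seeE k / (8 ^ (k + 1) - 1) := rfl
  rw [this, abs_div, abs_mul, abs_of_pos (show (0 : ℝ) < 8 ^ (k + 1) - 1 by linarith)]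
  norm_num

/-- Ratio test: `|seeE (k + 1)| / |seeE k| = 8 / (8 ^ (k + 1) - 1)` decays geometrically, so the
ratio `8 ^ (n + 1) / (8 ^ (k + 1) - 1)` of consecutive terms tends to zero. -/
lemma seeE_summable (n : ℕ) : Summable fun k => |seeE k| * ((8 : ℝ) ^ k) ^ n := by
  refine summable_of_ratio_norm_eventually_le (r := 1 / 2) (by norm_num) ?_
  filter_upwards [eventually_ge_atTop (n + 1)] with k hk
  have h1 : (8 : ℝ) ^ (n + 2) ≤ 8 ^ (k + 1) := pow_le_pow_right₀ (by norm_num) (by omega)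
  have h0 : (1 : ℝ) ≤ 8 ^ n := one_le_pow₀ (by norm_num)
  have h2 : (0 : ℝ) < 8 ^ (k + 1) - 1 := by
    rw [pow_add] at h1; linarith
  rw [Real.norm_of_nonneg (by positivity), Real.norm_of_nonneg (by positivity), seeE_abs]
  rw [div_mul_eq_mul_div, div_le_iff₀ h2]
  have h3 : ((8 : ℝ) ^ (k + 1)) ^ n = (8 ^ k) ^ n * 8 ^ n := by rw [pow_succ, mul_pow]
  rw [h3]
  have h4 : 0 ≤ |seeE k| * (8 ^ k) ^ n := by positivity
  have h5 : (8 : ℝ) * 8 ^ n ≤ 1 / 2 * (8 ^ (k + 1) - 1) := by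
    rw [pow_add] at h1; linarith
  nlinarith [mul_le_mul_of_nonneg_left h5 h4]

lemma seeE_summable' (n : ℕ) : Summable fun k => seeE k * ((8 : ℝ) ^ k) ^ n := by
  refine Summable.of_norm ?_
  convert seeE_summable n using 2 with k
  rw [norm_mul, Real.norm_eq_abs, Real.norm_of_nonneg (by positivity)]

/-- `F(8ⁿ) = 0`. For `n = 0` the partial sums of `F(1)` telescope; the induction step is the
functional equation of `F`. -/
lemma seeE_moment (n : ℕ) : ∑' k, seeE k * ((8 : ℝ) ^ k) ^ n = 0 := by
  induction n with
  | zero =>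
    have hs := (seeE_summable' 0).hasSum.tendsto_sum_nat
    -- closed form of the partial sums, from `seeE_succ`
    have hp : ∀ N : ℕ, ∑ k ∈ Finset.range (N + 1), seeE k * ((8 : ℝ) ^ k) ^ 0
        = seeE N * (8⁻¹ : ℝ) ^ N := by
      intro N
      induction N with
      | zero => simp [seeE]
      | succ N ih =>
        rw [Finset.sum_range_succ, ih]
        have := seeE_succ N
        have h8 : (8 : ℝ) ^ N ≠ 0 := by positivity
        rw [pow_succ] at this
        rw [inv_pow, inv_pow, pow_succ]
        field_simp
        linarith
    have h0 : Tendsto (fun N => seeE N * (8⁻¹ : ℝ) ^ N) atTop (𝓝 0) := by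
      have h1 : Tendsto seeE atTop (𝓝 0) := by
        simpa using (seeE_summable' 0).tendsto_atTop_zero
      have h2 : Tendsto (fun N : ℕ => (8⁻¹ : ℝ) ^ N) atTop (𝓝 0) :=
        tendsto_pow_atTop_nhds_zero_of_lt_one (by norm_num) (by norm_num)
      simpa using h1.mul h2
    refine tendsto_nhds_unique (hs.comp (tendsto_add_atTop_nat 1)) ?_
    exact h0.congr fun N => (hp N).symm
  | succ n ih =>
    have e1 := (seeE_summable' (n + 1)).tsum_eq_zero_add
    have e2 := (seeE_summable' n).tsum_eq_zero_add
    have s2 : Summable fun k => seeE (k + 1) * ((8 : ℝ) ^ (k + 1)) ^ n :=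
      (summable_nat_add_iff 1).2 (seeE_summable' n)
    have e3 : ∀ k, seeE (k + 1) * ((8 : ℝ) ^ (k + 1)) ^ (n + 1)
        = seeE (k + 1) * ((8 : ℝ) ^ (k + 1)) ^ n
          - 8 * 8 ^ n * (seeE k * ((8 : ℝ) ^ k) ^ n) := by
      intro k
      have := seeE_succ k
      rw [pow_succ _ n, mul_comm _ ((8 : ℝ) ^ (k + 1)), ← mul_assoc, this]
      rw [show ((8 : ℝ) ^ (k + 1)) ^ n = (8 ^ k) ^ n * 8 ^ n by rw [pow_succ, mul_pow]]
      ring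
    rw [e1]
    simp_rw [e3]
    rw [s2.tsum_sub ((seeE_summable' n).mul_left _), tsum_mul_left, ih]
    rw [ih] at e2
    simp only [pow_zero, one_pow, mul_one] at e2 ⊢
    linarith

/-- Coefficients for Seeley's reflection. Dividing the coefficients of `F` by `8ʲ + 1` turns the
identities `F(8ⁿ) = 0` into the statement that the moments alternate in sign, with constant absolute
value; this value is nonzero and is normalised to `1`. -/
lemma exists_seeley : ∃ c : ℕ → ℝ, (∀ n : ℕ, Summable fun j => |c j| * ((8 : ℝ) ^ j) ^ n) ∧
    ∀ n : ℕ, ∑' j, c j * (-(8 : ℝ) ^ j) ^ n = 1 := by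
  set b : ℕ → ℝ := fun k => seeE k / (8 ^ k + 1) with hb
  have hbs : ∀ n : ℕ, Summable fun j => |b j| * ((8 : ℝ) ^ j) ^ n := by
    intro n
    refine Summable.of_nonneg_of_le (fun k => by positivity) (fun k => ?_) (seeE_summable n)
    refine mul_le_mul_of_nonneg_right ?_ (by positivity)
    simp only [hb]
    rw [abs_div]
    refine div_le_self (abs_nonneg _) ?_
    rw [abs_of_pos (by positivity)]
    linarith [show (0 : ℝ) < 8 ^ k by positivity]
  have hbs' : ∀ n : ℕ, Summable fun j => b j * ((8 : ℝ) ^ j) ^ n := by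
    intro n
    refine Summable.of_norm ?_
    convert hbs n using 2 with k
    rw [norm_mul, Real.norm_eq_abs, Real.norm_of_nonneg (by positivity)]
  have hrec : ∀ n : ℕ, ∑' j, b j * ((8 : ℝ) ^ j) ^ n = (-1) ^ n * ∑' j, b j := by
    intro n
    induction n with
    | zero => simp
    | succ n ih =>
      have := seeE_moment n
      have e : ∀ k, seeE k * ((8 : ℝ) ^ k) ^ n
          = b k * ((8 : ℝ) ^ k) ^ (n + 1) + b k * ((8 : ℝ) ^ k) ^ n := by
        intro k
        have : (8 : ℝ) ^ k + 1 ≠ 0 := by positivity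
        simp only [hb]
        field_simp
        ring
      simp_rw [e] at this
      rw [(hbs' (n + 1)).tsum_add (hbs' n), ih] at this
      rw [pow_succ]
      linarith
  -- `b 0 = 1/2`, while the remaining terms add up to at most `1/4` in absolute value
  have hb0 : ∑' j, b j ≠ 0 := by
    have hs : Summable b := by simpa using hbs' 0
    have hbd : ∀ k, |b (k + 1)| ≤ 1 / 2 * (1 / 3) ^ (k + 1) := by
      have hstep : ∀ k, |b (k + 1)| ≤ |b k| * (1 / 3) := by
        intro k
        have h0 : (1 : ℝ) ≤ 8 ^ k := one_le_pow₀ (by norm_num)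
        have h2 : (0 : ℝ) < 8 ^ (k + 1) - 1 := by rw [pow_succ]; linarith
        simp only [hb]
        rw [abs_div, abs_div, seeE_abs, abs_of_pos (show (0 : ℝ) < 8 ^ (k + 1) + 1 by positivity),
          abs_of_pos (show (0 : ℝ) < 8 ^ k + 1 by positivity), div_div, div_mul_div_comm,
          div_le_div_iff₀ (by positivity) (by positivity)]
        have h3 : (8 : ℝ) * ((8 ^ k + 1) * 3) ≤ (8 ^ (k + 1) - 1) * (8 ^ (k + 1) + 1) := by
          rw [pow_succ]; nlinarith
        nlinarith [mul_le_mul_of_nonneg_left h3 (abs_nonneg (seeE k))]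
      intro k
      induction k with
      | zero =>
        refine (hstep 0).trans ?_
        simp [hb, seeE]; norm_num
      | succ k ih =>
        refine (hstep (k + 1)).trans ?_
        rw [pow_succ _ (k + 1)]
        linarith
    have hg : HasSum (fun k : ℕ => 1 / 2 * (1 / 3 : ℝ) ^ (k + 1)) (1 / 4) := by
      have := (hasSum_geometric_of_lt_one (r := (1 / 3 : ℝ)) (by norm_num) (by norm_num)).mul_left
        (1 / 6)
      have e1 : (fun k : ℕ => 1 / 2 * (1 / 3 : ℝ) ^ (k + 1)) = fun k => 1 / 6 * (1 / 3) ^ k := by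
        funext k; ring
      have e2 : (1 / 4 : ℝ) = 1 / 6 * (1 - 1 / 3)⁻¹ := by norm_num
      rw [e1, e2]
      exact this
    have ht : |∑' k, b (k + 1)| ≤ 1 / 4 := by
      rw [← Real.norm_eq_abs]
      exact tsum_of_norm_bounded hg fun k => by rw [Real.norm_eq_abs]; exact hbd k
    rw [hs.tsum_eq_zero_add]
    have hb00 : b 0 = 1 / 2 := by simp [hb, seeE]; norm_num
    rw [hb00]
    have := (abs_le.1 ht).1
    intro h
    linarith
  refine ⟨fun j => b j / ∑' j, b j, fun n => ?_, fun n => ?_⟩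
  · have e : (fun j => |b j / ∑' j, b j| * ((8 : ℝ) ^ j) ^ n)
        = fun j => |b j| * ((8 : ℝ) ^ j) ^ n * |∑' j, b j|⁻¹ := by
      funext j; rw [abs_div]; ring
    rw [e]
    exact (hbs n).mul_right _
  · have e : ∀ j, b j / (∑' j, b j) * (-(8 : ℝ) ^ j) ^ n
        = (∑' j, b j)⁻¹ * (-1) ^ n * (b j * ((8 : ℝ) ^ j) ^ n) := by
      intro j; rw [neg_pow ((8 : ℝ) ^ j)]; ring
    simp_rw [e]
    rw [tsum_mul_left, hrec]
    have : ((-1 : ℝ) ^ n) * (-1) ^ n = 1 := by rw [← mul_pow]; simp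
    field_simp
    rw [sq]; exact this

/-! ### Smoothness from partial derivatives, and Fourier inversion -/

/-- A function with continuous partial derivatives `g j` along the vectors `b j` of a basis (with
dual family `φ`) is differentiable. -/
lemma hasFDerivAt_of_partials {E ι : Type*} [NormedAddCommGroup E] [NormedSpace ℝ E] [Fintype ι]
    (b : ι → E) (φ : ι → E →L[ℝ] ℝ) (hb : ∀ z, ∑ j, φ j z • b j = z)
    (f : E → ℂ) (g : ι → E → ℂ) (hg : ∀ j, Continuous (g j))
    (hfg : ∀ j z, HasDerivAt (fun s : ℝ => f (z + s • b j)) (g j z) 0) (z₀ : E) :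
    HasFDerivAt f (∑ j, (φ j).smulRight (g j z₀)) z₀ := by
  classical
  rw [hasFDerivAt_iff_isLittleO, Asymptotics.isLittleO_iff]
  intro c hc
  set M : ℝ := 1 + ∑ j, ‖φ j‖ with hM
  have hMpos : 0 < M := by positivity
  set ε := c / M with hε
  have hεpos : 0 < ε := by positivity
  have hev : ∀ᶠ z in 𝓝 z₀, ∀ j, ‖g j z - g j z₀‖ ≤ ε := by
    rw [eventually_all]
    intro j
    have := (hg j).continuousAt (x := z₀)
    filter_upwards [Metric.continuousAt_iff'.1 this ε hεpos] with z hz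
    rw [dist_eq_norm] at hz
    exact hz.le
  obtain ⟨δ, hδ, hball⟩ := Metric.eventually_nhds_iff.1 hev
  -- the increment along each coordinate direction is controlled by the mean value inequality
  have key : ∀ (a : ι → ℝ), (∑ j, ‖a j • b j‖ < δ) → ∀ S : Finset ι,
      ‖f (z₀ + ∑ j ∈ S, a j • b j) - f z₀ - ∑ j ∈ S, a j • g j z₀‖ ≤ ε * ∑ j ∈ S, |a j| := by
    intro a ha S
    induction S using Finset.induction_on with
    | empty => simp
    | insert i S hi ih =>
      set w := z₀ + ∑ j ∈ S, a j • b j with hw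
      have hd : ∀ s : ℝ, HasDerivAt (fun s : ℝ => f (w + s • b i) - s • g i z₀)
          (g i (w + s • b i) - g i z₀) s := by
        intro s
        have h1 := hfg i (w + s • b i)
        have h2 : HasDerivAt (fun u : ℝ => f (w + u • b i)) (g i (w + s • b i)) s := by
          have h3 : HasDerivAt (fun u : ℝ => u - s) 1 s := (hasDerivAt_id s).sub_const s
          have h1' : HasDerivAt (fun u : ℝ => f (w + s • b i + u • b i)) (g i (w + s • b i))
              (s - s) := by simpa using h1
          have := HasDerivAt.scomp (h := fun u : ℝ => u - s) s h1' h3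
          simp only [one_smul] at this
          refine this.congr_of_eventuallyEq (Eventually.of_forall fun u => ?_)
          simp only [Function.comp]
          congr 1
          rw [sub_smul]; abel
        have h4 : HasDerivAt (fun u : ℝ => u • g i z₀) ((1 : ℝ) • g i z₀) s :=
          (hasDerivAt_id s).smul_const _
        rw [one_smul] at h4
        exact h2.sub h4
      have hbd : ∀ s ∈ Set.uIcc 0 (a i), ‖g i (w + s • b i) - g i z₀‖ ≤ ε := by
        intro s hs
        refine hball ?_ i
        rw [dist_eq_norm, hw]
        have hs' : ‖s • b i‖ ≤ ‖a i • b i‖ := by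
          rw [norm_smul, norm_smul]
          refine mul_le_mul_of_nonneg_right ?_ (norm_nonneg _)
          have := Set.abs_sub_left_of_mem_uIcc hs
          simpa using this
        calc ‖z₀ + ∑ j ∈ S, a j • b j + s • b i - z₀‖
            = ‖∑ j ∈ S, a j • b j + s • b i‖ := by congr 1; abel
          _ ≤ ∑ j ∈ S, ‖a j • b j‖ + ‖a i • b i‖ :=
              (norm_add_le _ _).trans (add_le_add (norm_sum_le _ _) hs')
          _ = ∑ j ∈ insert i S, ‖a j • b j‖ := by rw [Finset.sum_insert hi, add_comm]
          _ ≤ ∑ j, ‖a j • b j‖ :=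
              Finset.sum_le_sum_of_subset_of_nonneg (Finset.subset_univ _)
                fun _ _ _ => norm_nonneg _
          _ < δ := ha
      have hmv := (convex_uIcc (0 : ℝ) (a i)).norm_image_sub_le_of_norm_hasDerivWithin_le
        (fun s _ => (hd s).hasDerivWithinAt) hbd Set.left_mem_uIcc Set.right_mem_uIcc
      simp only [zero_smul, add_zero, sub_zero, Real.norm_eq_abs] at hmv
      rw [Finset.sum_insert hi, Finset.sum_insert hi, Finset.sum_insert hi]
      have e : f (z₀ + (a i • b i + ∑ j ∈ S, a j • b j)) - f z₀
            - (a i • g i z₀ + ∑ j ∈ S, a j • g j z₀)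
          = (f (w + a i • b i) - a i • g i z₀ - f w)
            + (f w - f z₀ - ∑ j ∈ S, a j • g j z₀) := by
        rw [hw, show z₀ + (a i • b i + ∑ j ∈ S, a j • b j)
          = z₀ + ∑ j ∈ S, a j • b j + a i • b i by abel]
        abel
      rw [e, mul_add]
      exact (norm_add_le _ _).trans (add_le_add hmv ih)
  have hsmall : ∀ᶠ z in 𝓝 z₀, ∑ j, ‖φ j (z - z₀) • b j‖ < δ := by
    have : ContinuousAt (fun z => ∑ j, ‖φ j (z - z₀) • b j‖) z₀ := by fun_prop
    have h0 : ∑ j, ‖φ j (z₀ - z₀) • b j‖ < δ := by simpa using hδ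
    exact this.eventually (gt_mem_nhds h0)
  filter_upwards [hsmall] with z hz
  have := key (fun j => φ j (z - z₀)) hz Finset.univ
  simp only [hb] at this
  rw [add_sub_cancel] at this
  simp only [sum_apply, ContinuousLinearMap.smulRight_apply]
  refine this.trans ?_
  have hs : ∑ j, |φ j (z - z₀)| ≤ M * ‖z - z₀‖ := by
    rw [hM, add_mul, Finset.sum_mul]
    have : ∑ j, |φ j (z - z₀)| ≤ ∑ j, ‖φ j‖ * ‖z - z₀‖ :=
      Finset.sum_le_sum fun j _ => (φ j).le_opNorm _
    have := norm_nonneg (z - z₀)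
    linarith
  calc ε * ∑ j, |φ j (z - z₀)| ≤ ε * (M * ‖z - z₀‖) := by gcongr
    _ = c * ‖z - z₀‖ := by rw [hε]; field_simp

/-- A family of continuous functions closed under partial derivatives consists of smooth
functions. -/
lemma contDiff_family {E ι I : Type*} [NormedAddCommGroup E] [NormedSpace ℝ E] [Fintype ι]
    (b : ι → E) (φ : ι → E →L[ℝ] ℝ) (hb : ∀ z, ∑ j, φ j z • b j = z)
    (F : I → E → ℂ) (nx : ι → I → I) (hF : ∀ i, Continuous (F i))
    (hd : ∀ i j z, HasDerivAt (fun s : ℝ => F i (z + s • b j)) (F (nx j i) z) 0) (i : I) :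
    ContDiff ℝ (⊤ : ℕ∞) (F i) := by
  have hfd : ∀ i z, HasFDerivAt (F i) (∑ j, (φ j).smulRight (F (nx j i) z)) z := fun i z =>
    hasFDerivAt_of_partials b φ hb (F i) (fun j => F (nx j i)) (fun j => hF _) (hd i) z
  rw [contDiff_infty]
  intro n
  induction n generalizing i with
  | zero => exact contDiff_zero.2 (hF i)
  | succ n ih =>
    rw [show ((n + 1 : ℕ) : WithTop ℕ∞) = (n : WithTop ℕ∞) + 1 by norm_cast,
      contDiff_succ_iff_fderiv]
    refine ⟨fun z => (hfd i z).differentiableAt, by simp, ?_⟩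
    have : fderiv ℝ (F i) = fun z => ∑ j, (φ j).smulRight (F (nx j i) z) :=
      funext fun z => (hfd i z).fderiv
    rw [this]
    refine ContDiff.sum fun j _ => ?_
    exact (ContinuousLinearMap.smulRightL ℝ E ℂ (φ j)).contDiff.comp (ih (nx j i))

/-- Fourier inversion in weak form, in the normalisation of `pFinv1`. -/
lemma integral_pF1_mul_pFinv1 (g : SchwartzMap ℝ ℂ) (φ : SchwartzMap ℝ ℂ) :
    ∫ τ : ℝ, (∫ t : ℝ, Complex.exp (-(Complex.I * ((t * τ : ℝ) : ℂ))) * g t) * pFinv1 φ τ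
      = ∫ t : ℝ, g t * φ t := by
  open FourierTransform in
  have h1 : ∀ τ : ℝ, (∫ t : ℝ, Complex.exp (-(Complex.I * ((t * τ : ℝ) : ℂ))) * g t)
      = 𝓕 g (τ / (2 * π)) := by
    intro τ
    rw [SchwartzMap.fourier_coe, Real.fourier_real_eq_integral_exp_smul]
    congr 1
    funext t
    rw [smul_eq_mul]
    congr 2
    have : (π : ℂ) ≠ 0 := by exact_mod_cast Real.pi_ne_zero
    push_cast
    field_simp
  have h2 : ∀ τ : ℝ, pFinv1 φ τ = ((2 * π)⁻¹ : ℝ) • 𝓕⁻ φ (τ / (2 * π)) := by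
    intro τ
    rw [SchwartzMap.fourierInv_coe, Real.fourierInv_eq', pFinv1]
    congr 2
    funext t
    rw [smul_eq_mul]
    congr 2
    have : (π : ℂ) ≠ 0 := by exact_mod_cast Real.pi_ne_zero
    simp only [RCLike.inner_apply, conj_trivial]
    push_cast
    field_simp
  simp_rw [h1, h2]
  have h3 := Measure.integral_comp_div (fun u : ℝ => 𝓕 g u * (((2 * π)⁻¹ : ℝ) • 𝓕⁻ φ u)) (2 * π)
  rw [h3]
  simp_rw [mul_smul_comm]
  rw [integral_smul, smul_smul, abs_of_pos (by positivity), mul_inv_cancel₀ (by positivity),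
    one_smul, SchwartzMap.integral_fourier_mul_eq, FourierTransform.fourier_fourierInv_eq]

/-! ### Mixed derivatives on the half-space -/

/-- A derivative along a line at parameter `s`, from the one at parameter `0` of the shifted
line. -/
lemma hasDerivAt_line_shift {E : Type*} [AddCommGroup E] [Module ℝ E] {F : E → ℂ} {b z : E}
    {s : ℝ} {c : ℂ} (h : HasDerivAt (fun u : ℝ => F (z + s • b + u • b)) c 0) :
    HasDerivAt (fun u : ℝ => F (z + u • b)) c s := by
  have h2 : HasDerivAt (fun u : ℝ => u - s) 1 s := (hasDerivAt_id s).sub_const s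
  rw [← sub_self s] at h
  have h3 := HasDerivAt.scomp (h := fun u : ℝ => u - s) s h h2
  rw [one_smul] at h3
  refine h3.congr_of_eventuallyEq (Eventually.of_forall fun u => ?_)
  simp only [Function.comp]
  rw [add_assoc, ← add_smul, add_sub_cancel]

/-- The space of the variables `((x', t), ξ')` of a symbol-kernel. -/
abbrev Zs (m : ℕ) : Type := (Eu m × ℝ) × Eu m

/-- The coordinate directions in `Zs m`: `none` is `t`, `some (false, i)` is `x'_i` and
`some (true, i)` is `ξ'_i`. -/
abbrev Dr (m : ℕ) : Type := Option (Bool × Fin m)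

/-- The unit vector of a coordinate direction. -/
def bv {m : ℕ} : Dr m → Zs m
  | none => ((0, 1), 0)
  | some (false, i) => ((Pi.single i 1, 0), 0)
  | some (true, i) => ((0, 0), Pi.single i 1)

/-- The closed half-space `t ≥ 0`. -/
def Hs (m : ℕ) : Set (Zs m) := {z | 0 ≤ z.1.2}

/-- The iterated partial derivative of `f` along a word of directions, the head of the word being
applied last. Derivatives are taken within the half-space, so that they are one-sided at `t = 0`. -/
def Wd {m : ℕ} (f : Zs m → ℂ) : List (Dr m) → Zs m → ℂ
  | [] => f
  | v :: w => fun z => fderivWithin ℝ (Wd f w) (Hs m) z (bv v)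

/-- Number of `t`-derivatives in a word. -/
def nt {m : ℕ} (w : List (Dr m)) : ℕ := w.count none

/-- Number of `ξ'`-derivatives in a word. -/
def nxi {m : ℕ} (w : List (Dr m)) : ℕ := w.countP fun v => v.any Prod.fst

lemma interior_sub (m : ℕ) : {z : Zs m | 0 < z.1.2} ⊆ interior (Hs m) :=
  interior_maximal (fun z hz => le_of_lt (show 0 < z.1.2 from hz))
    (isOpen_lt continuous_const (by fun_prop))

lemma interior_ne (m : ℕ) : (interior (Hs m)).Nonempty :=
  ⟨((0, 1), 0), interior_sub m (by simp)⟩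

lemma convex_Hs (m : ℕ) : Convex ℝ (Hs m) := by
  intro x hx y hy a b ha hb _
  simp only [Hs, Set.mem_ofPred_eq, Prod.fst_add, Prod.snd_add, Prod.smul_fst, Prod.smul_snd,
    smul_eq_mul] at *
  positivity

lemma uniq_Hs (m : ℕ) : UniqueDiffOn ℝ (Hs m) := uniqueDiffOn_convex (convex_Hs m) (interior_ne m)

lemma mem_closure_Hs {m : ℕ} {z : Zs m} (hz : z ∈ Hs m) : z ∈ closure (interior (Hs m)) := by
  rw [(convex_Hs m).closure_interior_eq_closure_of_nonempty_interior (interior_ne m)]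
  exact subset_closure hz

lemma Wd_smooth {m : ℕ} {f : Zs m → ℂ} (hf : ContDiffOn ℝ (⊤ : ℕ∞) f (Hs m)) (w : List (Dr m)) :
    ContDiffOn ℝ (⊤ : ℕ∞) (Wd f w) (Hs m) := by
  induction w with
  | nil => exact hf
  | cons v w ih => exact (ih.fderivWithin (uniq_Hs m) (by simp)).clm_apply contDiffOn_const

lemma Wd_hasFDerivWithinAt {m : ℕ} {f : Zs m → ℂ} (hf : ContDiffOn ℝ (⊤ : ℕ∞) f (Hs m))
    (w : List (Dr m)) {z : Zs m} (hz : z ∈ Hs m) :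
    HasFDerivWithinAt (Wd f w) (fderivWithin ℝ (Wd f w) (Hs m) z) (Hs m) z :=
  (((Wd_smooth hf w).differentiableOn (by simp)) z hz).hasFDerivWithinAt

/-- Symmetry of second derivatives, up to the boundary: only the letters of the word matter. -/
lemma Wd_perm {m : ℕ} {f : Zs m → ℂ} (hf : ContDiffOn ℝ (⊤ : ℕ∞) f (Hs m))
    {w w' : List (Dr m)} (h : w.Perm w') : ∀ z ∈ Hs m, Wd f w z = Wd f w' z := by
  induction h with
  | nil => intro z _; rfl
  | cons v h ih =>
    intro z hz
    simp only [Wd]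
    rw [fderivWithin_congr ih (ih z hz)]
  | swap u v w =>
    intro z hz
    have hs := ((Wd_smooth hf w) z hz).isSymmSndFDerivWithinAt
      (by rw [minSmoothness_of_isRCLikeNormedField]; exact WithTop.coe_le_coe.2 le_top)
      (uniq_Hs m) (mem_closure_Hs hz) hz
    have hdd : DifferentiableWithinAt ℝ (fderivWithin ℝ (Wd f w) (Hs m)) (Hs m) z :=
      (((Wd_smooth hf w).fderivWithin (uniq_Hs m) (m := ((⊤ : ℕ∞) : WithTop ℕ∞)) (by simp)).differentiableOn (by simp)) z hz
    have e : ∀ a c : Zs m, fderivWithin ℝ (fun z => fderivWithin ℝ (Wd f w) (Hs m) z a) (Hs m) z c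
        = fderivWithin ℝ (fderivWithin ℝ (Wd f w) (Hs m)) (Hs m) z c a := by
      intro a c
      rw [fderivWithin_clm_apply (uniq_Hs m z hz) hdd (differentiableWithinAt_const a)]
      simp
    simp only [Wd]
    rw [e, e]
    exact hs _ _
  | trans _ _ ih1 ih2 => intro z hz; rw [ih1 z hz, ih2 z hz]

/-- Derivative along a line that stays in the half-space. -/
lemma Wd_hasDerivAt {m : ℕ} {f : Zs m → ℂ} (hf : ContDiffOn ℝ (⊤ : ℕ∞) f (Hs m))
    (w : List (Dr m)) (v : Dr m) {z : Zs m} (hz : z ∈ Hs m)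
    (hv : ∀ᶠ s : ℝ in 𝓝 0, z + s • bv v ∈ Hs m) :
    HasDerivAt (fun s : ℝ => Wd f w (z + s • bv v)) (Wd f (v :: w) z) 0 := by
  have h1 : HasDerivAt (fun s : ℝ => z + s • bv v) (bv v) 0 := by
    simpa using ((hasDerivAt_id (0 : ℝ)).smul_const (bv v)).const_add z
  have h2 := Wd_hasFDerivWithinAt hf w hz
  have h3 : HasFDerivWithinAt (Wd f w) (fderivWithin ℝ (Wd f w) (Hs m) z) (Hs m)
      (z + (0 : ℝ) • bv v) := by simpa using h2
  have h4 : HasDerivWithinAt (fun s : ℝ => Wd f w (z + s • bv v)) (Wd f (v :: w) z)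
      {s : ℝ | z + s • bv v ∈ Hs m} 0 :=
    h3.comp_hasDerivWithinAt (0 : ℝ) h1.hasDerivWithinAt fun s hs => hs
  exact h4.hasDerivAt hv

lemma Wd_hasDerivWithinAt_t {m : ℕ} {f : Zs m → ℂ} (hf : ContDiffOn ℝ (⊤ : ℕ∞) f (Hs m))
    (w : List (Dr m)) (x' ξ' : Eu m) {t : ℝ} (ht : 0 ≤ t) :
    HasDerivWithinAt (fun s : ℝ => Wd f w ((x', s), ξ')) (Wd f (none :: w) ((x', t), ξ'))
      (Set.Ici 0) t := by
  have h1 : HasDerivAt (fun s : ℝ => (((x', s), ξ') : Zs m)) (bv (m := m) none) t :=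
    ((hasDerivAt_const t x').prodMk (hasDerivAt_id t)).prodMk (hasDerivAt_const t ξ')
  exact (Wd_hasFDerivWithinAt hf w (z := ((x', t), ξ')) ht).comp_hasDerivWithinAt t
    h1.hasDerivWithinAt fun s hs => hs

lemma Wd_iterT {m : ℕ} {f : Zs m → ℂ} (hf : ContDiffOn ℝ (⊤ : ℕ∞) f (Hs m))
    (w : List (Dr m)) (x' ξ' : Eu m) (n : ℕ) {t : ℝ} (ht : 0 ≤ t) :
    iteratedDerivWithin n (fun s : ℝ => Wd f w ((x', s), ξ')) (Set.Ici 0) t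
      = Wd f (List.replicate n none ++ w) ((x', t), ξ') := by
  induction n generalizing t with
  | zero => simp
  | succ n ih =>
    have hc : Set.EqOn (iteratedDerivWithin n (fun s : ℝ => Wd f w ((x', s), ξ')) (Set.Ici 0))
        (fun s => Wd f (List.replicate n none ++ w) ((x', s), ξ')) (Set.Ici 0) :=
      fun s hs => ih hs
    rw [iteratedDerivWithin_succ, derivWithin_congr hc (hc ht)]
    exact (Wd_hasDerivWithinAt_t hf _ x' ξ' ht).derivWithin (uniqueDiffOn_Ici 0 t ht)

/-! ### Multi-index derivatives and words -/

/-- If the family `F` is closed under partial derivatives via `nx`, then `mDeriv` acts on it by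
moving the index. -/
lemma mDeriv_family {k : ℕ} {J : Type*} (F : J → Eu k → ℂ) (nx : Fin k → J → J)
    (h : ∀ i j, cDeriv i (F j) = F (nx i j)) (α : Fin k → ℕ) (j : J) :
    mDeriv α (F j) = F ((List.finRange k).foldr (fun i q => (nx i)^[α i] q) j) := by
  have hit : ∀ i n j, (cDeriv i)^[n] (F j) = F ((nx i)^[n] j) := by
    intro i n
    induction n with
    | zero => intro j; rfl
    | succ n ih => intro j; rw [Function.iterate_succ_apply, h, ih, Function.iterate_succ_apply]
  rw [mDeriv]
  induction List.finRange k with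
  | nil => rfl
  | cons i L ih => rw [List.foldr_cons, List.foldr_cons, ih, hit]

/-- Additive bookkeeping along the index moves of `mDeriv_family`: if the `i`-th move adds `δ i`
to `μ`, then `∂^α` adds `∑ αᵢ δᵢ`. -/
lemma foldr_measure {k : ℕ} {J A : Type*} [AddCommMonoid A] (nx : Fin k → J → J) (μ : J → A)
    (δ : Fin k → A) (h : ∀ i j, μ (nx i j) = μ j + δ i) (α : Fin k → ℕ) (j : J) :
    μ ((List.finRange k).foldr (fun i q => (nx i)^[α i] q) j) = μ j + ∑ i, α i • δ i := by
  have hit : ∀ i n j, μ ((nx i)^[n] j) = μ j + n • δ i := by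
    intro i n
    induction n with
    | zero => intro j; simp
    | succ n ih => intro j; rw [Function.iterate_succ_apply, ih, h, succ_nsmul']; abel
  rw [Fin.sum_univ_def]
  induction List.finRange k with
  | nil => simp
  | cons i L ih => rw [List.foldr_cons, hit, ih, List.map_cons, List.sum_cons]; abel

lemma update_eq_add {k : ℕ} (x : Eu k) (i : Fin k) (t : ℝ) :
    Function.update x i t = x + (t - x i) • (Pi.single i 1 : Eu k) := by
  funext j
  by_cases h : j = i
  · subst h; simp
  · simp [h]

/-- A partial derivative `cDeriv` computed from a derivative along a line. -/
lemma cDeriv_eq_of_line {k : ℕ} (f : Eu k → ℂ) (i : Fin k) (x : Eu k) (c : ℂ)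
    (h : HasDerivAt (fun s : ℝ => f (x + s • (Pi.single i 1 : Eu k))) c 0) :
    cDeriv i f x = c := by
  have h3 : HasDerivAt (fun u : ℝ => u - x i) 1 (x i) := (hasDerivAt_id _).sub_const _
  have h1 : HasDerivAt (fun s : ℝ => f (x + s • (Pi.single i 1 : Eu k))) c (x i - x i) := by
    simpa using h
  have := HasDerivAt.scomp (h := fun u : ℝ => u - x i) (x i) h1 h3
  simp only [one_smul] at this
  rw [cDeriv]
  refine HasDerivAt.deriv (this.congr_of_eventuallyEq (Eventually.of_forall fun u => ?_))
  simp only [Function.comp, update_eq_add]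

/-- The word of `∂_{ξ'}^α` applied after the derivatives in `w`, in the order used by `mDeriv`. -/
def wxi {m : ℕ} (α : Fin m → ℕ) (w : List (Dr m)) : List (Dr m) :=
  (List.finRange m).foldr (fun i q => (List.cons (some (true, i)))^[α i] q) w

/-- The word of `∂_{x'}^β` applied after the derivatives in `w`, in the order used by
`mDeriv`. -/
def wx {m : ℕ} (β : Fin m → ℕ) (w : List (Dr m)) : List (Dr m) :=
  (List.finRange m).foldr (fun i q => (List.cons (some (false, i)))^[β i] q) w

lemma mem_Hs_xi {m : ℕ} {z : Zs m} (hz : z ∈ Hs m) (v : Bool × Fin m) (s : ℝ) :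
    z + s • bv (some v) ∈ Hs m := by
  rcases v with ⟨_ | _, i⟩ <;> simpa [Hs, bv] using hz

/-- The tangential derivatives in the symbol-kernel seminorms, written as a word. -/
lemma mixed_eq {m : ℕ} {f : Zs m → ℂ} (hf : ContDiffOn ℝ (⊤ : ℕ∞) f (Hs m))
    (α β : Fin m → ℕ) (w : List (Dr m)) (x' ξ' : Eu m) {t : ℝ} (ht : 0 ≤ t) :
    mDeriv β (fun y => mDeriv α (fun η => Wd f w ((y, t), η)) ξ') x'
      = Wd f (wx β (wxi α w)) ((x', t), ξ') := by
  have h1 : ∀ y, mDeriv α (fun η => Wd f w ((y, t), η)) = fun η => Wd f (wxi α w) ((y, t), η) := by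
    intro y
    refine mDeriv_family (fun w η => Wd f w ((y, t), η)) (fun i => List.cons (some (true, i)))
      ?_ α w
    intro i w
    funext η
    refine cDeriv_eq_of_line _ _ _ _ ?_
    have := Wd_hasDerivAt hf w (some (true, i)) (z := ((y, t), η)) ht
      (Eventually.of_forall fun s => mem_Hs_xi (by exact ht) _ s)
    simpa [bv] using this
  simp_rw [h1]
  have h2 := mDeriv_family (fun w y => Wd f w ((y, t), ξ'))
    (fun i : Fin m => List.cons (some (false, i))) ?_ β (wxi α w)
  · exact congrFun h2 x'
  · intro i w
    funext y
    refine cDeriv_eq_of_line _ _ _ _ ?_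
    have := Wd_hasDerivAt hf w (some (false, i)) (z := ((y, t), ξ')) ht
      (Eventually.of_forall fun s => mem_Hs_xi (by exact ht) _ s)
    simpa [bv] using this

lemma nxi_wxi {m : ℕ} (α : Fin m → ℕ) (w : List (Dr m)) : nxi (wxi α w) = nxi w + degS α := by
  have := foldr_measure (fun i : Fin m => List.cons (some (true, i) : Dr m)) nxi (fun _ => 1)
    (fun i w => by simp [nxi]) α w
  simpa [wxi, degS] using this

lemma nxi_wx {m : ℕ} (α : Fin m → ℕ) (w : List (Dr m)) : nxi (wx α w) = nxi w := by
  have := foldr_measure (fun i : Fin m => List.cons (some (false, i) : Dr m)) nxi (fun _ => 0)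
    (fun i w => by simp [nxi]) α w
  simpa [wx] using this

lemma nt_wxi {m : ℕ} (α : Fin m → ℕ) (w : List (Dr m)) : nt (wxi α w) = nt w := by
  have := foldr_measure (fun i : Fin m => List.cons (some (true, i) : Dr m)) nt (fun _ => 0)
    (fun i w => by simp [nt]) α w
  simpa [wxi] using this

lemma nt_wx {m : ℕ} (α : Fin m → ℕ) (w : List (Dr m)) : nt (wx α w) = nt w := by
  have := foldr_measure (fun i : Fin m => List.cons (some (false, i) : Dr m)) nt (fun _ => 0)
    (fun i w => by simp [nt]) α w
  simpa [wx] using this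

/-- Every word is a rearrangement of one of the form `∂_t^n ∂_{x'}^β ∂_{ξ'}^α`. -/
lemma perm_canonical {m : ℕ} (w : List (Dr m)) :
    (List.replicate (nt w) none ++ wx (fun i => w.count (some (false, i)))
      (wxi (fun i => w.count (some (true, i))) [])).Perm w := by
  rw [List.perm_iff_count]
  intro v
  have h1 := foldr_measure (fun i : Fin m => List.cons (some (false, i) : Dr m)) (List.count v)
    (fun i => if (some (false, i) : Dr m) = v then 1 else 0)
    (fun i w => by simp [List.count_cons]) (fun i => w.count (some (false, i)))
    (wxi (fun i => w.count (some (true, i))) [])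
  have h2 := foldr_measure (fun i : Fin m => List.cons (some (true, i) : Dr m)) (List.count v)
    (fun i => if (some (true, i) : Dr m) = v then 1 else 0)
    (fun i w => by simp [List.count_cons]) (fun i => w.count (some (true, i))) []
  rw [List.count_append, wx, h1, wxi, h2, List.count_replicate]
  rcases v with _ | ⟨_ | _, i⟩ <;> simp [nt]

lemma jap_pos {k : ℕ} (ξ : Eu k) : 0 < jap ξ :=
  Real.sqrt_pos.2 (by have : 0 ≤ ∑ i, ξ i ^ 2 := Finset.sum_nonneg fun i _ => sq_nonneg _
                      linarith)

lemma one_le_jap {k : ℕ} (ξ : Eu k) : 1 ≤ jap ξ :=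
  Real.one_le_sqrt.2 (by have : 0 ≤ ∑ i, ξ i ^ 2 := Finset.sum_nonneg fun i _ => sq_nonneg _
                         linarith)

lemma jap_continuous {k : ℕ} : Continuous (jap (m := k)) := by
  unfold jap; fun_prop

/-- The symbol-kernel estimates for all mixed derivatives of `k`, taken in any order. -/
lemma Wd_bound {m : ℕ} {d : ℝ} {k : Eu m → ℝ → Eu m → ℂ} (hk : InPK (d - 1) k)
    (w : List (Dr m)) (l : ℕ) : ∃ C : ℝ, 0 ≤ C ∧ ∀ z ∈ Hs m,
      |z.1.2| ^ l * ‖Wd (fun z => k z.1.1 z.1.2 z.2) w z‖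
        ≤ C * jap z.2 ^ (d - nxi w - l + nt w) := by
  obtain ⟨hs, hb⟩ := hk
  set f : Zs m → ℂ := fun z => k z.1.1 z.1.2 z.2 with hf
  set α : Fin m → ℕ := fun i => w.count (some (true, i)) with hα
  set β : Fin m → ℕ := fun i => w.count (some (false, i)) with hβ
  have hp := perm_canonical w
  have hdeg : degS α = nxi w := by
    have h1 : nxi w = nxi (List.replicate (nt w) none ++ wx β (wxi α [])) :=
      (hp.countP_eq _).symm
    rw [h1]
    have h2 : nxi (List.replicate (nt w) none ++ wx β (wxi α [])) = nxi (wx β (wxi α [])) := by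
      simp [nxi, List.countP_append, List.countP_replicate]
    rw [h2, nxi_wx, nxi_wxi]
    simp [nxi]
  refine ⟨(pkSemiE (d - 1) α β l (nt w) k).toReal, ENNReal.toReal_nonneg, ?_⟩
  rintro ⟨⟨x', t⟩, ξ'⟩ ht
  have ht' : 0 ≤ t := ht
  have hle : ENNReal.ofReal (jap ξ' ^ (-((d - 1) + 1 - (degS α : ℝ) - (l : ℝ) + (nt w : ℝ))) *
      ‖pkDeriv α β l (nt w) k x' t ξ'‖) ≤ pkSemiE (d - 1) α β l (nt w) k :=
    le_iSup_of_le x' (le_iSup_of_le ξ' (le_iSup_of_le (⟨t, ht'⟩ : Set.Ici (0 : ℝ)) le_rfl))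
  have hle2 := (ENNReal.ofReal_le_iff_le_toReal (hb α β l (nt w))).1 hle
  have hpk : pkDeriv α β l (nt w) k x' t ξ' = (t : ℂ) ^ l * Wd f w ((x', t), ξ') := by
    rw [pkDeriv, ← Wd_perm hs hp _ ht, ← Wd_iterT hs _ x' ξ' _ ht']
    congr 1
    refine iteratedDerivWithin_congr (fun u hu => ?_) ht'
    exact mixed_eq hs α β [] x' ξ' hu
  rw [hpk, norm_mul, norm_pow, Complex.norm_real, Real.norm_eq_abs, hdeg] at hle2
  have hj := jap_pos ξ'
  rw [Real.rpow_neg hj.le, inv_mul_le_iff₀ (Real.rpow_pos_of_pos hj _), mul_comm (jap ξ' ^ _)] at hle2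
  rwa [show d - (nxi w : ℝ) - l + nt w = d - 1 + 1 - (nxi w : ℝ) - l + nt w by ring]

/-! ### Seeley extension -/

/-- The projection onto the half-space. Composing with it extends functions on the half-space
continuously, so that sums over reflections converge at every point. -/
def projH {m : ℕ} (z : Zs m) : Zs m := ((z.1.1, max z.1.2 0), z.2)

/-- The reflection `t ↦ -8ʲ t`. -/
def reflH {m : ℕ} (j : ℕ) (z : Zs m) : Zs m := ((z.1.1, -(8 : ℝ) ^ j * z.1.2), z.2)

/-- The series of reflected derivatives: for `t < 0` this is `∂^w` of
`∑ⱼ cⱼ f(x', -8ʲ t, ξ')`, each `t`-derivative contributing a factor `-8ʲ`. -/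
def serH {m : ℕ} (c : ℕ → ℝ) (f : Zs m → ℂ) (w : List (Dr m)) (z : Zs m) : ℂ :=
  ∑' j, ((c j * (-(8 : ℝ) ^ j) ^ nt w : ℝ) : ℂ) * Wd f w (projH (reflH j z))

/-- The derivative `∂^w` of the Seeley extension of `f`, given by separate formulas for `t ≥ 0`
and `t < 0`. -/
def extH {m : ℕ} (c : ℕ → ℝ) (f : Zs m → ℂ) (w : List (Dr m)) (z : Zs m) : ℂ :=
  if 0 ≤ z.1.2 then Wd f w (projH z) else serH c f w z

lemma projH_mem {m : ℕ} (z : Zs m) : projH z ∈ Hs m :=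
  show (0 : ℝ) ≤ max z.1.2 0 from le_max_right _ _

lemma projH_of_mem {m : ℕ} {z : Zs m} (hz : z ∈ Hs m) : projH z = z := by
  rcases z with ⟨⟨x, t⟩, ξ⟩
  have : max t 0 = t := max_eq_left hz
  simp [projH, this]

lemma continuous_projH (m : ℕ) : Continuous (projH (m := m)) := by
  unfold projH; fun_prop

lemma continuous_reflH (m j : ℕ) : Continuous (reflH (m := m) j) := by
  unfold reflH; fun_prop

lemma continuous_Wd_proj {m : ℕ} {f : Zs m → ℂ} (hf : ContDiffOn ℝ (⊤ : ℕ∞) f (Hs m))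
    (w : List (Dr m)) : Continuous fun z => Wd f w (projH z) :=
  (Wd_smooth hf w).continuousOn.comp_continuous (continuous_projH m) projH_mem

lemma jap_rpow_continuous {k : ℕ} (e : ℝ) : Continuous fun ξ : Eu k => jap ξ ^ e :=
  jap_continuous.rpow_const fun ξ => Or.inl (jap_pos ξ).ne'

/-- The symbol-kernel estimates of order `d - 1` on the set `s`, for all words `w`. -/
def KerBd {m : ℕ} (d : ℝ) (s : Set (Zs m)) (P : List (Dr m) → Zs m → ℂ) : Prop :=
  ∀ (w : List (Dr m)) (l : ℕ), ∃ C : ℝ, 0 ≤ C ∧ ∀ z ∈ s,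
    |z.1.2| ^ l * ‖P w z‖ ≤ C * jap z.2 ^ (d - nxi w - l + nt w)

section
variable {m : ℕ} {d : ℝ} {c : ℕ → ℝ} {f : Zs m → ℂ}

lemma coef_abs (c : ℕ → ℝ) (j n : ℕ) :
    ‖((c j * (-(8 : ℝ) ^ j) ^ n : ℝ) : ℂ)‖ = |c j| * ((8 : ℝ) ^ j) ^ n := by
  rw [Complex.norm_real, Real.norm_eq_abs, abs_mul, abs_pow, abs_neg,
    abs_of_pos (by positivity : (0 : ℝ) < 8 ^ j)]

/-- The estimates survive reflection, because `|t| ≤ 8ʲ |t|` while the right-hand side does not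
depend on `t`. -/
lemma refl_bound (hb : KerBd d (Hs m) (Wd f)) (w : List (Dr m)) (l : ℕ) :
    ∃ C : ℝ, 0 ≤ C ∧ ∀ j, ∀ z : Zs m, z.1.2 ≤ 0 →
      |z.1.2| ^ l * ‖Wd f w (projH (reflH j z))‖ ≤ C * jap z.2 ^ (d - nxi w - l + nt w) := by
  obtain ⟨C, hC, h⟩ := hb w l
  refine ⟨C, hC, fun j z hz => ?_⟩
  have h8 : (1 : ℝ) ≤ 8 ^ j := one_le_pow₀ (by norm_num)
  have hm : reflH j z ∈ Hs m := by
    show 0 ≤ -(8 : ℝ) ^ j * z.1.2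
    nlinarith
  refine le_trans ?_ (h (reflH j z) hm)
  rw [projH_of_mem hm]
  refine mul_le_mul_of_nonneg_right (pow_le_pow_left₀ (abs_nonneg _) ?_ l) (norm_nonneg _)
  show |z.1.2| ≤ |-(8 : ℝ) ^ j * z.1.2|
  rw [abs_mul, abs_neg, abs_of_pos (by positivity : (0 : ℝ) < 8 ^ j)]
  nlinarith [abs_nonneg z.1.2]

lemma proj_bound0 (hb : KerBd d (Hs m) (Wd f)) (w : List (Dr m)) :
    ∃ C : ℝ, 0 ≤ C ∧ ∀ z : Zs m, ‖Wd f w (projH z)‖ ≤ C * jap z.2 ^ (d - nxi w + nt w) := by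
  obtain ⟨C, hC, h⟩ := hb w 0
  refine ⟨C, hC, fun z => ?_⟩
  simpa [projH] using h _ (projH_mem z)

lemma continuous_serH (hf : ContDiffOn ℝ (⊤ : ℕ∞) f (Hs m)) (hb : KerBd d (Hs m) (Wd f))
    (hc : ∀ n : ℕ, Summable fun j => |c j| * ((8 : ℝ) ^ j) ^ n) (w : List (Dr m)) :
    Continuous (serH c f w) := by
  obtain ⟨C, hC, h⟩ := proj_bound0 hb w
  set e : ℝ := d - nxi w + nt w
  have hJ : Continuous fun z : Zs m => ((jap z.2 ^ e : ℝ) : ℂ) :=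
    Complex.continuous_ofReal.comp ((jap_rpow_continuous e).comp continuous_snd)
  have hJ0 : ∀ z : Zs m, ((jap z.2 ^ e : ℝ) : ℂ) ≠ 0 := fun z => by
    exact_mod_cast (Real.rpow_pos_of_pos (jap_pos z.2) e).ne'
  -- dividing by the weight makes the series uniformly convergent on the whole space
  have heq : serH c f w = fun z => ((jap z.2 ^ e : ℝ) : ℂ) *
      ∑' j, ((c j * (-(8 : ℝ) ^ j) ^ nt w : ℝ) : ℂ) * Wd f w (projH (reflH j z)) /
        ((jap z.2 ^ e : ℝ) : ℂ) := by
    funext z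
    rw [← tsum_mul_left]
    refine tsum_congr fun j => ?_
    rw [mul_div_cancel₀ _ (hJ0 z)]
  rw [heq]
  refine hJ.mul (continuous_tsum (fun j => ?_) ((hc (nt w)).mul_right C) fun j z => ?_)
  · exact (continuous_const.mul ((continuous_Wd_proj hf w).comp (continuous_reflH m j))).div hJ hJ0
  · rw [norm_div, norm_mul, coef_abs, Complex.norm_real, Real.norm_eq_abs,
      abs_of_pos (Real.rpow_pos_of_pos (jap_pos z.2) e), mul_div_assoc]
    gcongr
    rw [div_le_iff₀ (Real.rpow_pos_of_pos (jap_pos z.2) e)]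
    exact h (reflH j z)

/-- At `t = 0` the moment conditions make the reflected derivatives match the original ones. -/
lemma serH_zero (hs : ∀ n : ℕ, ∑' j, c j * (-(8 : ℝ) ^ j) ^ n = 1) (w : List (Dr m)) (z : Zs m)
    (hz : z.1.2 = 0) : serH c f w z = Wd f w (projH z) := by
  have : ∀ j, reflH j z = z := fun j => by
    rcases z with ⟨⟨x, t⟩, ξ⟩
    simp only at hz
    simp [reflH, hz]
  simp only [serH, this]
  rw [tsum_mul_right, ← Complex.ofReal_tsum, hs]
  simp

lemma continuous_extH (hf : ContDiffOn ℝ (⊤ : ℕ∞) f (Hs m)) (hb : KerBd d (Hs m) (Wd f))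
    (hc : ∀ n : ℕ, Summable fun j => |c j| * ((8 : ℝ) ^ j) ^ n)
    (hs : ∀ n : ℕ, ∑' j, c j * (-(8 : ℝ) ^ j) ^ n = 1) (w : List (Dr m)) :
    Continuous (extH c f w) :=
  Continuous.if_le (continuous_Wd_proj hf w) (continuous_serH hf hb hc w) continuous_const
    (by fun_prop) fun z hz => (serH_zero hs w z hz.symm).symm

lemma extH_bound (hb : KerBd d (Hs m) (Wd f))
    (hc : ∀ n : ℕ, Summable fun j => |c j| * ((8 : ℝ) ^ j) ^ n) :
    KerBd d Set.univ (extH c f) := by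
  intro w l
  obtain ⟨C, hC, h⟩ := hb w l
  obtain ⟨C', hC', h'⟩ := refl_bound hb w l
  set M := ∑' j, |c j| * ((8 : ℝ) ^ j) ^ nt w with hM
  have hM0 : 0 ≤ M := tsum_nonneg fun j => by positivity
  refine ⟨C + M * C', by positivity, fun z _ => ?_⟩
  have hj := (Real.rpow_pos_of_pos (jap_pos z.2) (d - nxi w - l + nt w)).le
  rw [add_mul]
  by_cases hz : 0 ≤ z.1.2
  · rw [extH, if_pos hz, projH_of_mem hz]
    exact (h z hz).trans (le_add_of_nonneg_right (by positivity))
  · rw [extH, if_neg hz]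
    refine le_trans ?_ (le_add_of_nonneg_left (by positivity))
    have hn : |z.1.2| ^ l * ‖serH c f w z‖ = ‖((|z.1.2| ^ l : ℝ) : ℂ) * serH c f w z‖ := by
      rw [norm_mul, Complex.norm_real, Real.norm_eq_abs,
        abs_of_nonneg (pow_nonneg (abs_nonneg z.1.2) l)]
    rw [hn, serH, ← tsum_mul_left]
    have hsum := ((hc (nt w)).hasSum.mul_right (C' * jap z.2 ^ (d - nxi w - l + nt w)))
    rw [← hM, ← mul_assoc] at hsum
    refine tsum_of_norm_bounded hsum fun j => ?_
    rw [norm_mul, norm_mul, coef_abs, Complex.norm_real, Real.norm_eq_abs,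
      abs_of_nonneg (by positivity : 0 ≤ |z.1.2| ^ l), mul_left_comm]
    refine mul_le_mul_of_nonneg_left ?_ (by positivity)
    exact h' j z (not_le.1 hz).le

lemma line_t {z : Zs m} (v : Dr m) (s : ℝ) :
    (z + s • bv v).1.2 = z.1.2 + (if v = none then s else 0) := by
  rcases v with _ | ⟨_ | _, i⟩ <;> simp [bv]

lemma reflH_line (j : ℕ) (z : Zs m) (v : Dr m) (s : ℝ) :
    reflH j (z + s • bv v)
      = reflH j z + ((if v = none then -(8 : ℝ) ^ j else 1) * s) • bv v := by
  rcases v with _ | ⟨_ | _, i⟩ <;> ext <;> simp [bv, reflH]; ring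

lemma nt_cons (v : Dr m) (w : List (Dr m)) : nt (v :: w) = nt w + if v = none then 1 else 0 := by
  simp [nt, List.count_cons]

/-- Derivative of one reflected term; the chain rule supplies the factor `-8ʲ` in direction
`t`. -/
lemma refl_hasDerivAt (hf : ContDiffOn ℝ (⊤ : ℕ∞) f (Hs m)) (w : List (Dr m)) (v : Dr m) (j : ℕ)
    {z : Zs m} (hz : z.1.2 < 0) :
    HasDerivAt (fun s : ℝ => ((c j * (-(8 : ℝ) ^ j) ^ nt w : ℝ) : ℂ) *
        Wd f w (projH (reflH j (z + s • bv v))))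
      (((c j * (-(8 : ℝ) ^ j) ^ nt (v :: w) : ℝ) : ℂ) * Wd f (v :: w) (projH (reflH j z))) 0 := by
  have hpos : 0 < (reflH j z).1.2 := by
    show 0 < -(8 : ℝ) ^ j * z.1.2
    have : (0 : ℝ) < 8 ^ j := by positivity
    nlinarith
  set κ : ℝ := if v = none then -(8 : ℝ) ^ j else 1 with hκ
  have hcont : Continuous fun s : ℝ => (reflH j z + s • bv v).1.2 := by fun_prop
  have hev : ∀ᶠ s : ℝ in 𝓝 0, 0 < (reflH j z + s • bv v).1.2 :=
    hcont.continuousAt.eventually_const_lt (by simpa using hpos)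
  have h1 := Wd_hasDerivAt hf w v (z := reflH j z) hpos.le (hev.mono fun s hs => hs.le)
  have h2 : HasDerivAt (fun s : ℝ => κ * s) κ 0 := by
    simpa using (hasDerivAt_id (0 : ℝ)).const_mul κ
  have h1' : HasDerivAt (fun s : ℝ => Wd f w (reflH j z + s • bv v))
      (Wd f (v :: w) (reflH j z)) (κ * 0) := by simpa using h1
  have h3 := (h1'.scomp (0 : ℝ) h2).const_mul ((c j * (-(8 : ℝ) ^ j) ^ nt w : ℝ) : ℂ)
  have hcont2 : Continuous fun s : ℝ => (reflH j z + (κ * s) • bv v).1.2 := by fun_prop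
  have hev2 : ∀ᶠ s : ℝ in 𝓝 0, 0 < (reflH j z + (κ * s) • bv v).1.2 :=
    hcont2.continuousAt.eventually_const_lt (by simpa using hpos)
  rw [projH_of_mem (z := reflH j z) hpos.le]
  refine (h3.congr_of_eventuallyEq ?_).congr_deriv ?_
  · filter_upwards [hev2] with s hs
    rw [reflH_line, ← hκ, projH_of_mem (le_of_lt hs)]
    rfl
  · rw [nt_cons, hκ]
    split_ifs <;> (simp [pow_succ]; try ring)

/-- Termwise differentiation of the series of reflections. -/
lemma serH_hasDerivAt (hf : ContDiffOn ℝ (⊤ : ℕ∞) f (Hs m)) (hb : KerBd d (Hs m) (Wd f))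
    (hc : ∀ n : ℕ, Summable fun j => |c j| * ((8 : ℝ) ^ j) ^ n) (w : List (Dr m)) (v : Dr m)
    {z : Zs m} (hz : z.1.2 < 0) :
    HasDerivAt (fun s : ℝ => serH c f w (z + s • bv v)) (serH c f (v :: w) z) 0 := by
  obtain ⟨C, hC, h⟩ := proj_bound0 hb (v :: w)
  obtain ⟨C0, hC0, h0⟩ := proj_bound0 hb w
  set e : ℝ := d - nxi (v :: w) + nt (v :: w)
  set r : ℝ := -z.1.2 with hr
  have hr0 : 0 < r := by simp only [hr]; linarith
  have hcontJ : Continuous fun s : ℝ => jap (z + s • bv v).2 ^ e :=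
    (jap_rpow_continuous e).comp (by fun_prop)
  obtain ⟨B, hB⟩ := (isCompact_Icc (a := -r) (b := r)).exists_bound_of_continuousOn
    hcontJ.continuousOn
  have hneg : ∀ s ∈ Set.Ioo (-r) r, (z + s • bv v).1.2 < 0 := by
    intro s hs
    rw [line_t]
    split_ifs
    · simp only [hr] at hs; linarith [hs.2]
    · linarith
  have key := hasDerivAt_tsum_of_isPreconnected (𝕜 := ℝ) (F := ℂ)
    (g := fun j s => ((c j * (-(8 : ℝ) ^ j) ^ nt w : ℝ) : ℂ) *
        Wd f w (projH (reflH j (z + s • bv v))))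
    (g' := fun j s => ((c j * (-(8 : ℝ) ^ j) ^ nt (v :: w) : ℝ) : ℂ) *
        Wd f (v :: w) (projH (reflH j (z + s • bv v))))
    (u := fun j => |c j| * ((8 : ℝ) ^ j) ^ nt (v :: w) * (C * B))
    (t := Set.Ioo (-r) r) (y₀ := 0) (y := 0)
    ((hc (nt (v :: w))).mul_right _) isOpen_Ioo isPreconnected_Ioo ?_ ?_ ⟨by linarith, hr0⟩ ?_
    ⟨by linarith, hr0⟩
  · simpa [serH] using key
  · intro j s hs
    exact hasDerivAt_line_shift (F := fun z => ((c j * (-(8 : ℝ) ^ j) ^ nt w : ℝ) : ℂ) *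
      Wd f w (projH (reflH j z))) (refl_hasDerivAt (c := c) hf w v j (hneg s hs))
  · intro j s hs
    rw [norm_mul, coef_abs]
    gcongr
    refine (h _).trans ?_
    gcongr
    exact (le_abs_self _).trans (hB s (Set.Ioo_subset_Icc_self hs))
  · refine Summable.of_norm_bounded
      ((hc (nt w)).mul_right (C0 * jap z.2 ^ (d - nxi w + nt w))) fun j => ?_
    rw [norm_mul, coef_abs]
    gcongr
    simpa [reflH] using h0 (reflH j z)

/-- The functions `extH c f w` are the partial derivatives of one another, across the boundary
as well. -/
lemma extH_hasDerivAt (hf : ContDiffOn ℝ (⊤ : ℕ∞) f (Hs m)) (hb : KerBd d (Hs m) (Wd f))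
    (hc : ∀ n : ℕ, Summable fun j => |c j| * ((8 : ℝ) ^ j) ^ n)
    (hs : ∀ n : ℕ, ∑' j, c j * (-(8 : ℝ) ^ j) ^ n = 1) (w : List (Dr m)) (v : Dr m) (z : Zs m) :
    HasDerivAt (fun s : ℝ => extH c f w (z + s • bv v)) (extH c f (v :: w) z) 0 := by
  have hct : Continuous fun s : ℝ => (z + s • bv v).1.2 := by fun_prop
  -- the formula off the boundary
  have hneg : ∀ z : Zs m, z.1.2 < 0 →
      HasDerivAt (fun s : ℝ => extH c f w (z + s • bv v)) (extH c f (v :: w) z) 0 := by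
    intro z hz
    have hct : Continuous fun s : ℝ => (z + s • bv v).1.2 := by fun_prop
    have hev : ∀ᶠ s : ℝ in 𝓝 0, (z + s • bv v).1.2 < 0 :=
      hct.continuousAt.eventually_lt_const (by simpa using hz)
    rw [extH, if_neg (not_le.2 hz)]
    refine (serH_hasDerivAt hf hb hc w v hz).congr_of_eventuallyEq ?_
    filter_upwards [hev] with s hs
    rw [extH, if_neg (not_le.2 hs)]
  have hin : ∀ z : Zs m, 0 ≤ z.1.2 → (∀ᶠ s : ℝ in 𝓝 0, 0 ≤ (z + s • bv v).1.2) →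
      HasDerivAt (fun s : ℝ => extH c f w (z + s • bv v)) (extH c f (v :: w) z) 0 := by
    intro z hz hev
    rw [extH, if_pos hz, projH_of_mem hz]
    refine (Wd_hasDerivAt hf w v (z := z) hz hev).congr_of_eventuallyEq ?_
    filter_upwards [hev] with s hs
    rw [extH, if_pos hs, projH_of_mem hs]
  have hpos : ∀ z : Zs m, 0 < z.1.2 →
      HasDerivAt (fun s : ℝ => extH c f w (z + s • bv v)) (extH c f (v :: w) z) 0 := by
    intro z hz
    have hct : Continuous fun s : ℝ => (z + s • bv v).1.2 := by fun_prop
    have hev : ∀ᶠ s : ℝ in 𝓝 0, 0 < (z + s • bv v).1.2 :=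
      hct.continuousAt.eventually_const_lt (by simpa using hz)
    exact hin z hz.le (hev.mono fun s hs => hs.le)
  rcases lt_trichotomy z.1.2 0 with hz | hz | hz
  · exact hneg z hz
  · by_cases hv : v = none
    · -- at a boundary point the derivative is the limit of the derivatives nearby
      have hg : Continuous fun s : ℝ => extH c f (v :: w) (z + s • bv v) :=
        (continuous_extH hf hb hc hs (v :: w)).comp (by fun_prop)
      have hfc : Continuous fun s : ℝ => extH c f w (z + s • bv v) :=
        (continuous_extH hf hb hc hs w).comp (by fun_prop)
      have := hasDerivAt_of_hasDerivAt_of_ne (x := (0 : ℝ))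
        (f := fun s : ℝ => extH c f w (z + s • bv v))
        (g := fun s : ℝ => extH c f (v :: w) (z + s • bv v)) ?_ hfc.continuousAt hg.continuousAt
      · simpa using this
      · intro s hs0
        refine hasDerivAt_line_shift (F := extH c f w) ?_
        rcases lt_or_gt_of_ne hs0 with h | h
        · refine hneg _ ?_
          rw [line_t, hz, if_pos hv]; linarith
        · refine hpos _ ?_
          rw [line_t, hz, if_pos hv]; linarith
    · refine hin z hz.ge (Eventually.of_forall fun s => ?_)
      rw [line_t, hz, if_neg hv]; simp
  · exact hpos z hz

end

/-- The extended kernel together with all its mixed derivatives `P w`. -/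
lemma exists_ext {m : ℕ} {d : ℝ} {k : Eu m → ℝ → Eu m → ℂ} (hk : InPK (d - 1) k) :
    ∃ P : List (Dr m) → Zs m → ℂ,
      (∀ w, Continuous (P w)) ∧
      (∀ w v z, HasDerivAt (fun s : ℝ => P w (z + s • bv v)) (P (v :: w) z) 0) ∧
      KerBd d Set.univ P ∧
      ∀ z : Zs m, 0 ≤ z.1.2 → P [] z = k z.1.1 z.1.2 z.2 := by
  obtain ⟨c, hc, hs⟩ := exists_seeley
  have hb : KerBd d (Hs m) (Wd fun z => k z.1.1 z.1.2 z.2) := fun w l => Wd_bound hk w l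
  refine ⟨extH c fun z => k z.1.1 z.1.2 z.2, continuous_extH hk.1 hb hc hs,
    extH_hasDerivAt hk.1 hb hc hs, extH_bound hb hc, fun z hz => ?_⟩
  rw [extH, if_pos hz, projH_of_mem hz]
  rfl

/-! ### Weighted kernels and their Fourier transforms -/

/-- `P` is a family of continuous functions on `ℝ^m × ℝ × ℝ^m`, closed under partial
derivatives. -/
def IsFam {m : ℕ} (P : List (Dr m) → Zs m → ℂ) : Prop :=
  (∀ w, Continuous (P w)) ∧
    ∀ w v z, HasDerivAt (fun s : ℝ => P w (z + s • bv v)) (P (v :: w) z) 0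

section
variable {m : ℕ} {d : ℝ} {P : List (Dr m) → Zs m → ℂ}

lemma IsFam.contDiff (h : IsFam P) (w : List (Dr m)) : ContDiff ℝ (⊤ : ℕ∞) (P w) := by
  refine contDiff_family (bv (m := m)) (fun v => match v with
    | none => (ContinuousLinearMap.snd ℝ (Eu m) ℝ).comp (ContinuousLinearMap.fst ℝ _ (Eu m))
    | some (false, i) => (ContinuousLinearMap.proj i).comp
        ((ContinuousLinearMap.fst ℝ (Eu m) ℝ).comp (ContinuousLinearMap.fst ℝ _ (Eu m)))
    | some (true, i) => (ContinuousLinearMap.proj i).comp (ContinuousLinearMap.snd ℝ _ (Eu m)))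
    ?_ P (fun v w => v :: w) h.1 (fun w v z => h.2 w v z) w
  rintro ⟨⟨x, t⟩, ξ⟩
  rw [Fintype.sum_option, Fintype.sum_prod_type, Fintype.sum_bool]
  ext i <;> simp [bv, Prod.fst_sum, Prod.snd_sum, Finset.sum_apply, Pi.single_apply]

lemma IsFam.hasDerivAt_t (h : IsFam P) (w : List (Dr m)) (x' ξ' : Eu m) (t : ℝ) :
    HasDerivAt (fun s : ℝ => P w ((x', s), ξ')) (P (none :: w) ((x', t), ξ')) t := by
  have h1 := h.2 w none ((x', t), ξ')
  have h2 : HasDerivAt (fun s : ℝ => P w ((((x', 0), ξ') : Zs m) + s • bv none))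
      (P (none :: w) ((x', t), ξ')) t := by
    refine hasDerivAt_line_shift ?_
    simpa [bv] using h1
  simpa [bv] using h2

/-- The weighted kernel `(-i t)^q P_w(x', t, ξ')`. -/
def gk (P : List (Dr m) → Zs m → ℂ) (q : ℕ) (w : List (Dr m)) (x' ξ' : Eu m) (t : ℝ) : ℂ :=
  (-(Complex.I * (t : ℂ))) ^ q * P w ((x', t), ξ')

lemma norm_gk (q : ℕ) (w : List (Dr m)) (x' ξ' : Eu m) (t : ℝ) :
    ‖gk P q w x' ξ' t‖ = |t| ^ q * ‖P w ((x', t), ξ')‖ := by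
  simp [gk]

lemma gk_contDiff (h : IsFam P) (q : ℕ) (w : List (Dr m)) (x' ξ' : Eu m) :
    ContDiff ℝ (⊤ : ℕ∞) (gk P q w x' ξ') := by
  have h1 : ContDiff ℝ (⊤ : ℕ∞) fun t : ℝ => (((x', t), ξ') : Zs m) := by fun_prop
  have h2 : ContDiff ℝ (⊤ : ℕ∞) fun t : ℝ => (t : ℂ) := Complex.ofRealCLM.contDiff
  exact ((contDiff_const.mul h2).neg.pow q).mul ((h.contDiff w).comp h1)

/-- For `q = 0` the truncated `q - 1` is harmless, its coefficient being zero. -/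
lemma gk_hasDerivAt (h : IsFam P) (q : ℕ) (w : List (Dr m)) (x' ξ' : Eu m) (t : ℝ) :
    HasDerivAt (gk P q w x' ξ')
      ((-(Complex.I * q)) * gk P (q - 1) w x' ξ' t + gk P q (none :: w) x' ξ' t) t := by
  have h0 : HasDerivAt (fun t : ℝ => -(Complex.I * (t : ℂ))) (-(Complex.I * 1)) t :=
    ((hasDerivAt_id t).ofReal_comp.const_mul Complex.I).neg
  have h1 := (h0.pow q).mul (h.hasDerivAt_t w x' ξ' t)
  refine h1.congr_deriv ?_
  simp only [gk, Pi.pow_apply]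
  ring

/-- The estimate of the kernel with weights `|t|^q` and `|t|^(q+2)`, combined at the natural scale
`|t| ∼ ⟨ξ'⟩⁻¹`. -/
lemma gk_bound (hb : KerBd d Set.univ P) (q : ℕ) (w : List (Dr m)) :
    ∃ C : ℝ, 0 ≤ C ∧ ∀ x' ξ' t, ‖gk P q w x' ξ' t‖ * (1 + (jap ξ' * t) ^ 2)
      ≤ C * jap ξ' ^ (d - nxi w - q + nt w) := by
  obtain ⟨C1, hC1, h1⟩ := hb w q
  obtain ⟨C2, hC2, h2⟩ := hb w (q + 2)
  refine ⟨C1 + C2, by positivity, fun x' ξ' t => ?_⟩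
  have a1 := h1 ((x', t), ξ') trivial
  have a2 := h2 ((x', t), ξ') trivial
  simp only at a1 a2
  have hj := jap_pos ξ'
  have e2 : jap ξ' ^ (d - nxi w - q + nt w)
      = jap ξ' ^ 2 * jap ξ' ^ (d - nxi w - ((q + 2 : ℕ) : ℝ) + nt w) := by
    rw [← Real.rpow_natCast, ← Real.rpow_add hj]
    congr 1
    push_cast
    ring
  rw [norm_gk, add_mul]
  have a3 := mul_le_mul_of_nonneg_left a2 (by positivity : 0 ≤ jap ξ' ^ 2)
  rw [pow_add, sq_abs] at a3
  calc _ = |t| ^ q * ‖P w ((x', t), ξ')‖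
        + jap ξ' ^ 2 * (|t| ^ q * t ^ 2 * ‖P w ((x', t), ξ')‖) := by ring
    _ ≤ C1 * jap ξ' ^ (d - nxi w - q + nt w)
        + jap ξ' ^ 2 * (C2 * jap ξ' ^ (d - nxi w - ((q + 2 : ℕ) : ℝ) + nt w)) := add_le_add a1 a3
    _ = _ := by rw [mul_left_comm, ← e2]

/-- A majorant integrable in `t` and locally uniform in the parameters, for differentiation under the
integral sign. -/
lemma gk_dom (hb : KerBd d Set.univ P) (q : ℕ) (w : List (Dr m)) :
    ∃ C e : ℝ, 0 ≤ C ∧ ∀ x' ξ' t, ‖gk P q w x' ξ' t‖ ≤ C * jap ξ' ^ e * (1 + t ^ 2)⁻¹ := by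
  obtain ⟨C, hC, h⟩ := gk_bound hb q w
  refine ⟨C, d - nxi w - q + nt w, hC, fun x' ξ' t => ?_⟩
  rw [← div_eq_mul_inv, le_div_iff₀ (by positivity)]
  refine le_trans (mul_le_mul_of_nonneg_left ?_ (norm_nonneg _)) (h x' ξ' t)
  rw [mul_pow]
  have := one_le_pow₀ (one_le_jap ξ') (n := 2)
  nlinarith [sq_nonneg t]

lemma gk_integrable (h : IsFam P) (hb : KerBd d Set.univ P) (q : ℕ) (w : List (Dr m))
    (x' ξ' : Eu m) : Integrable (gk P q w x' ξ') := by
  obtain ⟨C, e, _, hC⟩ := gk_dom hb q w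
  exact (integrable_inv_one_add_sq.const_mul (C * jap ξ' ^ e)).mono'
    (gk_contDiff h q w x' ξ').continuous.aestronglyMeasurable (Eventually.of_forall (hC x' ξ'))

lemma norm_cexp (a b : ℝ) : ‖Complex.exp (-(Complex.I * ((a * b : ℝ) : ℂ)))‖ = 1 := by
  rw [show -(Complex.I * ((a * b : ℝ) : ℂ)) = ((-(a * b) : ℝ) : ℂ) * Complex.I by push_cast; ring]
  exact Complex.norm_exp_ofReal_mul_I _

/-- `L¹` bound of the weighted kernel; integration over the scale `⟨ξ'⟩⁻¹` gains one order. -/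
lemma gk_L1 (hb : KerBd d Set.univ P) (q : ℕ) (w : List (Dr m)) :
    ∃ C : ℝ, 0 ≤ C ∧ ∀ x' ξ', ∫ t, ‖gk P q w x' ξ' t‖
      ≤ C * jap ξ' ^ (d - 1 - nxi w - q + nt w) := by
  obtain ⟨C, hC, h⟩ := gk_bound hb q w
  refine ⟨C * π, by positivity, fun x' ξ' => ?_⟩
  have hj := jap_pos ξ'
  have hint : ∫ t : ℝ, C * jap ξ' ^ (d - nxi w - q + nt w) * (1 + (jap ξ' * t) ^ 2)⁻¹
      = C * π * jap ξ' ^ (d - 1 - nxi w - q + nt w) := by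
    rw [integral_const_mul,
      MeasureTheory.Measure.integral_comp_mul_left (fun t : ℝ => (1 + t ^ 2)⁻¹) (jap ξ'),
      integral_univ_inv_one_add_sq, abs_of_pos (inv_pos.2 hj), smul_eq_mul,
      show d - (nxi w : ℝ) - q + nt w = (d - 1 - nxi w - q + nt w) + 1 by ring,
      Real.rpow_add_one hj.ne']
    field_simp
  rw [← hint]
  refine integral_mono_of_nonneg (Eventually.of_forall fun t => norm_nonneg _) ?_
    (Eventually.of_forall fun t => ?_)
  · exact ((integrable_inv_one_add_sq.comp_mul_left' hj.ne').const_mul _)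
  · show _ ≤ _ * (1 + (jap ξ' * t) ^ 2)⁻¹
    rw [← div_eq_mul_inv, le_div_iff₀ (by positivity)]
    exact h x' ξ' t

/-- The Fourier transform in `t` of the weighted kernel. -/
def Ak (P : List (Dr m) → Zs m → ℂ) (q : ℕ) (w : List (Dr m)) (x' ξ' : Eu m) (τ : ℝ) : ℂ :=
  ∫ t : ℝ, Complex.exp (-(Complex.I * ((t * τ : ℝ) : ℂ))) * gk P q w x' ξ' t

lemma Ak_bound0 (hb : KerBd d Set.univ P) (q : ℕ) (w : List (Dr m)) :
    ∃ C : ℝ, 0 ≤ C ∧ ∀ x' ξ' τ, ‖Ak P q w x' ξ' τ‖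
      ≤ C * jap ξ' ^ (d - 1 - nxi w - q + nt w) := by
  obtain ⟨C, hC, h⟩ := gk_L1 hb q w
  refine ⟨C, hC, fun x' ξ' τ => ?_⟩
  refine (norm_integral_le_integral_norm _).trans (le_trans (le_of_eq ?_) (h x' ξ'))
  refine integral_congr_ae (Eventually.of_forall fun t => ?_)
  simp only
  rw [norm_mul, norm_cexp, one_mul]

lemma cexp_mul_integrable {g : ℝ → ℂ} (hg : Integrable g) (τ : ℝ) :
    Integrable fun t : ℝ => Complex.exp (-(Complex.I * ((t * τ : ℝ) : ℂ))) * g t := by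
  refine hg.bdd_mul (c := 1) (Continuous.aestronglyMeasurable (by fun_prop))
    (Eventually.of_forall fun t => (norm_cexp _ _).le)

/-- Integration by parts, which expresses `i τ` times the Fourier transform by those of the
derivative. -/
lemma Ak_ibp (h : IsFam P) (hb : KerBd d Set.univ P) (q : ℕ) (w : List (Dr m)) (x' ξ' : Eu m)
    (τ : ℝ) : Complex.I * τ * Ak P q w x' ξ' τ
      = (-(Complex.I * q)) * Ak P (q - 1) w x' ξ' τ + Ak P q (none :: w) x' ξ' τ := by
  have hI := fun q w => cexp_mul_integrable (gk_integrable h hb q w x' ξ') τ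
  have hE : ∀ t : ℝ, HasDerivAt (fun t : ℝ => Complex.exp (-(Complex.I * ((t * τ : ℝ) : ℂ))))
      (Complex.exp (-(Complex.I * ((t * τ : ℝ) : ℂ))) * (-(Complex.I * ((1 * τ : ℝ) : ℂ)))) t :=
    fun t => ((((hasDerivAt_id t).mul_const τ).ofReal_comp.const_mul Complex.I).neg).cexp
  have h2 : Integrable fun t : ℝ => (-(Complex.I * q)) *
        (Complex.exp (-(Complex.I * ((t * τ : ℝ) : ℂ))) * gk P (q - 1) w x' ξ' t)
      + Complex.exp (-(Complex.I * ((t * τ : ℝ) : ℂ))) * gk P q (none :: w) x' ξ' t :=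
    ((hI (q - 1) w).const_mul _).add (hI q (none :: w))
  have key := integral_eq_zero_of_hasDerivAt_of_integrable
    (f := fun t : ℝ => Complex.exp (-(Complex.I * ((t * τ : ℝ) : ℂ))) * gk P q w x' ξ' t)
    (f' := fun t : ℝ => -(Complex.I * τ) *
        (Complex.exp (-(Complex.I * ((t * τ : ℝ) : ℂ))) * gk P q w x' ξ' t)
      + ((-(Complex.I * q)) *
        (Complex.exp (-(Complex.I * ((t * τ : ℝ) : ℂ))) * gk P (q - 1) w x' ξ' t)
      + Complex.exp (-(Complex.I * ((t * τ : ℝ) : ℂ))) * gk P q (none :: w) x' ξ' t))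
    (fun t => ((hE t).mul (gk_hasDerivAt h q w x' ξ' t)).congr_deriv (by push_cast; ring))
    (((hI q w).const_mul _).add h2) (hI q w)
  rw [integral_add ((hI q w).const_mul _) h2,
    integral_add ((hI (q - 1) w).const_mul _) (hI q (none :: w)), integral_const_mul,
    integral_const_mul] at key
  simp only [Ak]
  linear_combination -key

/-- Each power of `τ` costs one power of `⟨ξ'⟩`, by integration by parts. -/
lemma Ak_decay (h : IsFam P) (hb : KerBd d Set.univ P) (N : ℕ) : ∀ (q : ℕ) (w : List (Dr m)),
    ∃ C : ℝ, 0 ≤ C ∧ ∀ x' ξ' τ, |τ| ^ N * ‖Ak P q w x' ξ' τ‖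
      ≤ C * jap ξ' ^ (d - 1 - nxi w - q + nt w + N) := by
  induction N with
  | zero => intro q w; simpa using Ak_bound0 hb q w
  | succ N ih =>
    intro q w
    obtain ⟨C1, hC1, h1⟩ := ih (q - 1) w
    obtain ⟨C2, hC2, h2⟩ := ih q (none :: w)
    refine ⟨q * C1 + C2, by positivity, fun x' ξ' τ => ?_⟩
    have hn : |τ| * ‖Ak P q w x' ξ' τ‖
        ≤ q * ‖Ak P (q - 1) w x' ξ' τ‖ + ‖Ak P q (none :: w) x' ξ' τ‖ := by
      have := congrArg norm (Ak_ibp h hb q w x' ξ' τ)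
      rw [norm_mul, norm_mul, Complex.norm_I, one_mul, Complex.norm_real, Real.norm_eq_abs] at this
      rw [this]
      refine (norm_add_le _ _).trans (le_of_eq ?_)
      simp
    have a1 := h1 x' ξ' τ
    have a2 := h2 x' ξ' τ
    have e2 : d - 1 - (nxi (none :: w) : ℝ) - q + nt (none :: w) + N
        = d - 1 - nxi w - q + nt w + ((N + 1 : ℕ) : ℝ) := by
      simp only [nxi, nt, List.countP_cons, List.count_cons]
      push_cast
      simp
      ring
    rw [e2] at a2
    have a1' : (q : ℝ) * (|τ| ^ N * ‖Ak P (q - 1) w x' ξ' τ‖)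
        ≤ q * (C1 * jap ξ' ^ (d - 1 - nxi w - q + nt w + ((N + 1 : ℕ) : ℝ))) := by
      rcases Nat.eq_zero_or_pos q with rfl | hq
      · simp
      · refine mul_le_mul_of_nonneg_left (a1.trans (le_of_eq ?_)) (by positivity)
        congr 2
        rw [Nat.cast_sub hq]
        push_cast
        ring
    calc |τ| ^ (N + 1) * ‖Ak P q w x' ξ' τ‖ = |τ| ^ N * (|τ| * ‖Ak P q w x' ξ' τ‖) := by ring
      _ ≤ |τ| ^ N * (q * ‖Ak P (q - 1) w x' ξ' τ‖ + ‖Ak P q (none :: w) x' ξ' τ‖) := by gcongr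
      _ = q * (|τ| ^ N * ‖Ak P (q - 1) w x' ξ' τ‖) + |τ| ^ N * ‖Ak P q (none :: w) x' ξ' τ‖ := by
        ring
      _ ≤ _ := by linarith [add_le_add a1' a2]

lemma jap_init_le (ξ : Eu (m + 1)) : jap (Fin.init ξ) ≤ jap ξ := by
  refine Real.sqrt_le_sqrt ?_
  rw [Fin.sum_univ_castSucc]
  have := sq_nonneg (ξ (Fin.last m))
  simp only [Fin.init]
  linarith

lemma jap_le_add (ξ : Eu (m + 1)) : jap ξ ≤ jap (Fin.init ξ) + |ξ (Fin.last m)| := by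
  have h0 : jap (Fin.init ξ) ^ 2 = 1 + ∑ i, (Fin.init ξ : Eu m) i ^ 2 :=
    Real.sq_sqrt (by have : 0 ≤ ∑ i, (Fin.init ξ : Eu m) i ^ 2 :=
                       Finset.sum_nonneg fun i _ => sq_nonneg _
                     linarith)
  refine Real.sqrt_le_iff.2 ⟨by have := jap_pos (Fin.init ξ : Eu m); positivity, ?_⟩
  rw [add_sq, h0, sq_abs, Fin.sum_univ_castSucc]
  have : 0 ≤ 2 * jap (Fin.init ξ : Eu m) * |ξ (Fin.last m)| := by
    have := jap_pos (Fin.init ξ : Eu m); positivity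
  simp only [Fin.init] at *
  linarith

/-- The estimate in terms of `⟨ξ⟩`: with `s` the expected order and `N ≥ -s`, use
`⟨ξ⟩^N ≲ ⟨ξ'⟩^N + |ξ_n|^N` and `⟨ξ'⟩^(s+N) ≤ ⟨ξ⟩^(s+N)`. -/
lemma Ak_symbol (h : IsFam P) (hb : KerBd d Set.univ P) (q : ℕ) (w : List (Dr m)) :
    ∃ C : ℝ, 0 ≤ C ∧ ∀ (x' : Eu m) (ξ : Eu (m + 1)),
      ‖Ak P q w x' (Fin.init ξ) (ξ (Fin.last m))‖
        ≤ C * jap ξ ^ (d - 1 - nxi w - q + nt w) := by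
  set s : ℝ := d - 1 - nxi w - q + nt w
  obtain ⟨N, hN⟩ := exists_nat_ge (-s)
  obtain ⟨C0, hC0, h0⟩ := Ak_decay h hb 0 q w
  obtain ⟨C1, hC1, h1⟩ := Ak_decay h hb N q w
  refine ⟨2 ^ (N - 1) * (C0 + C1), by positivity, fun x' ξ => ?_⟩
  have b0 := h0 x' (Fin.init ξ) (ξ (Fin.last m))
  have b1 := h1 x' (Fin.init ξ) (ξ (Fin.last m))
  simp only [pow_zero, one_mul, Nat.cast_zero, add_zero] at b0
  set A := ‖Ak P q w x' (Fin.init ξ) (ξ (Fin.last m))‖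
  set J := jap (Fin.init ξ : Eu m)
  have hJ : 0 < J := jap_pos _
  have hj := jap_pos ξ
  have hA : 0 ≤ A := norm_nonneg _
  have hpow : jap ξ ^ N ≤ 2 ^ (N - 1) * (J ^ N + |ξ (Fin.last m)| ^ N) :=
    (pow_le_pow_left₀ hj.le (jap_le_add ξ) N).trans (add_pow_le hJ.le (abs_nonneg _) N)
  have hJs : J ^ (s + N) ≤ jap ξ ^ (s + N) :=
    Real.rpow_le_rpow hJ.le (jap_init_le ξ) (by linarith)
  have b0' : J ^ N * A ≤ C0 * J ^ (s + N) := by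
    rw [Real.rpow_add_natCast hJ.ne']
    nlinarith [mul_le_mul_of_nonneg_left b0 (by positivity : 0 ≤ J ^ N)]
  have main : jap ξ ^ N * A ≤ jap ξ ^ N * (2 ^ (N - 1) * (C0 + C1) * jap ξ ^ s) := by
    calc jap ξ ^ N * A ≤ 2 ^ (N - 1) * (J ^ N + |ξ (Fin.last m)| ^ N) * A := by gcongr
      _ = 2 ^ (N - 1) * (J ^ N * A + |ξ (Fin.last m)| ^ N * A) := by ring
      _ ≤ 2 ^ (N - 1) * (C0 * J ^ (s + N) + C1 * J ^ (s + N)) := by gcongr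
      _ = 2 ^ (N - 1) * (C0 + C1) * J ^ (s + N) := by ring
      _ ≤ 2 ^ (N - 1) * (C0 + C1) * jap ξ ^ (s + N) := by gcongr
      _ = _ := by rw [Real.rpow_add_natCast hj.ne']; ring
  exact le_of_mul_le_mul_left main (by positivity)

end

/-! ### The symbol -/

/-- Indices `(r, q, w)`: `r` derivatives in `x_n`, `q` derivatives in `ξ_n`, and a word `w`. -/
abbrev Jx (m : ℕ) : Type := ℕ × ℕ × List (Dr m)

/-- The index move of one derivative in `x_i` (`(false, i)`) or `ξ_i` (`(true, i)`); the last
coordinate is the normal one. -/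
def nxJ {m : ℕ} (v : Bool × Fin (m + 1)) (j : Jx m) : Jx m :=
  match v.1 with
  | true => Fin.lastCases (motive := fun _ => Jx m) (j.1, j.2.1 + 1, j.2.2)
      (fun i => (j.1, j.2.1, some (true, i) :: j.2.2)) v.2
  | false => Fin.lastCases (motive := fun _ => Jx m) (j.1 + 1, j.2.1, j.2.2)
      (fun i => (j.1, j.2.1, some (false, i) :: j.2.2)) v.2

/-- The unit vector of a coordinate direction in `(x, ξ)`-space. -/
def bs {m : ℕ} : Bool × Fin (m + 1) → Eu (m + 1) × Eu (m + 1)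
  | (false, i) => (Pi.single i 1, 0)
  | (true, i) => (0, Pi.single i 1)

section
variable {m : ℕ} {d : ℝ} {P : List (Dr m) → Zs m → ℂ}

/-- The integrand of the derivative of the symbol with index `j`. It vanishes as soon as there is an
`x_n`-derivative, since the symbol does not depend on `x_n`. -/
def Phi (P : List (Dr m) → Zs m → ℂ) (j : Jx m) (z : Eu (m + 1) × Eu (m + 1)) (t : ℝ) : ℂ :=
  if j.1 = 0 then Complex.exp (-(Complex.I * ((t * z.2 (Fin.last m) : ℝ) : ℂ))) *
    gk P j.2.1 j.2.2 (Fin.init z.1) (Fin.init z.2) t else 0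

/-- The derivative of the symbol with index `j`; the symbol itself has index `(0, 0, [])`. -/
def AF (P : List (Dr m) → Zs m → ℂ) (j : Jx m) (z : Eu (m + 1) × Eu (m + 1)) : ℂ :=
  ∫ t : ℝ, Phi P j z t

lemma continuous_init {k : ℕ} : Continuous (fun x : Eu (k + 1) => (Fin.init x : Eu k)) :=
  continuous_pi fun i => continuous_apply i.castSucc

lemma Phi_continuous (h : IsFam P) (j : Jx m) :
    Continuous fun y : (Eu (m + 1) × Eu (m + 1)) × ℝ => Phi P j y.1 y.2 := by
  unfold Phi gk
  split_ifs
  · have h1 := h.1 j.2.2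
    have h2 := continuous_init (k := m)
    refine Continuous.mul ?_ (Continuous.mul ?_ (h1.comp
      (((h2.comp (by fun_prop)).prodMk (by fun_prop)).prodMk (h2.comp (by fun_prop)))))
    · fun_prop
    · fun_prop
  · exact continuous_const

/-- A majorant of the integrand, continuous in the parameters and integrable in `t`. -/
lemma Phi_dom (hb : KerBd d Set.univ P) (j : Jx m) :
    ∃ B : Eu (m + 1) × Eu (m + 1) → ℝ, Continuous B ∧ ∀ z t, ‖Phi P j z t‖ ≤ B z * (1 + t ^ 2)⁻¹ := by
  obtain ⟨C, e, hC, h⟩ := gk_dom hb j.2.1 j.2.2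
  refine ⟨fun z => C * jap (Fin.init z.2 : Eu m) ^ e, continuous_const.mul
    ((jap_rpow_continuous e).comp (continuous_init.comp continuous_snd)), fun z t => ?_⟩
  unfold Phi
  split_ifs
  · rw [norm_mul, norm_cexp, one_mul]
    exact h _ _ t
  · have := jap_pos (Fin.init z.2 : Eu m)
    rw [norm_zero]
    positivity

lemma init_add_smul {k : ℕ} (x y : Eu (k + 1)) (s : ℝ) :
    (Fin.init (x + s • y) : Eu k) = Fin.init x + s • (Fin.init y : Eu k) := rfl

lemma init_single_last {k : ℕ} : (Fin.init (Pi.single (Fin.last k) (1 : ℝ) : Eu (k + 1)) : Eu k) = 0 := by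
  funext i
  simp [Fin.init, Fin.castSucc_ne_last]

lemma init_single_castSucc {k : ℕ} (i : Fin k) :
    (Fin.init (Pi.single i.castSucc (1 : ℝ) : Eu (k + 1)) : Eu k) = Pi.single i 1 := by
  funext j
  simp [Fin.init, Pi.single_apply]

lemma init_zero {k : ℕ} : (Fin.init (0 : Eu (k + 1)) : Eu k) = 0 := rfl

lemma Phi_hasDerivAt (h : IsFam P) (j : Jx m) (v : Bool × Fin (m + 1))
    (z : Eu (m + 1) × Eu (m + 1)) (t : ℝ) :
    HasDerivAt (fun s : ℝ => Phi P j (z + s • bs v) t) (Phi P (nxJ v j) z t) 0 := by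
  obtain ⟨r, q, w⟩ := j
  obtain ⟨x, ξ⟩ := z
  have hlast : ∀ i : Fin m, (Pi.single i.castSucc (1 : ℝ) : Eu (m + 1)) (Fin.last m) = 0 :=
    fun i => by simp [(Fin.castSucc_ne_last i).symm]
  by_cases hr : r = 0
  swap
  · have h0 : ∀ z t, Phi P (r, q, w) z t = 0 := fun z t => by simp [Phi, hr]
    have h1 : Phi P (nxJ v (r, q, w)) (x, ξ) t = 0 := by
      obtain ⟨_ | _, i⟩ := v <;> refine Fin.lastCases ?_ (fun i => ?_) i <;> simp [nxJ, Phi, hr]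
    simp only [h0, h1]
    exact hasDerivAt_const _ _
  subst hr
  obtain ⟨b, i⟩ := v
  cases b
  · refine Fin.lastCases ?_ (fun i => ?_) i
    · simpa [nxJ, Phi, bs, init_add_smul, init_single_last] using hasDerivAt_const _ _
    · have h1 := h.2 w (some (false, i)) ((Fin.init x, t), Fin.init ξ)
      have h2 := h1.const_mul (Complex.exp (-(Complex.I * ((t * ξ (Fin.last m) : ℝ) : ℂ))) *
        (-(Complex.I * (t : ℂ))) ^ q)
      simpa [nxJ, Phi, bs, bv, gk, init_add_smul, init_single_castSucc, mul_assoc] using h2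
  · refine Fin.lastCases ?_ (fun i => ?_) i
    · have h0 : HasDerivAt (fun s : ℝ => -(Complex.I * ((t * (ξ (Fin.last m) + s) : ℝ) : ℂ)))
          (-(Complex.I * ((t * 1 : ℝ) : ℂ))) 0 :=
        (((((hasDerivAt_id (0 : ℝ)).const_add (ξ (Fin.last m))).const_mul t).ofReal_comp).const_mul
          Complex.I).neg
      have h1 := h0.cexp.mul_const (gk P q w (Fin.init x) (Fin.init ξ) t)
      have e : Phi P (nxJ (true, Fin.last m) (0, q, w)) (x, ξ) t
          = Complex.exp (-(Complex.I * ((t * (ξ (Fin.last m) + 0) : ℝ) : ℂ))) *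
            -(Complex.I * ((t * 1 : ℝ) : ℂ)) * gk P q w (Fin.init x) (Fin.init ξ) t := by
        simp [nxJ, Phi, gk]
        ring
      rw [e]
      simpa [Phi, bs, init_add_smul, init_single_last, init_zero] using h1
    · have h1 := h.2 w (some (true, i)) ((Fin.init x, t), Fin.init ξ)
      have h2 := h1.const_mul (Complex.exp (-(Complex.I * ((t * ξ (Fin.last m) : ℝ) : ℂ))) *
        (-(Complex.I * (t : ℂ))) ^ q)
      simpa [nxJ, Phi, bs, bv, gk, init_add_smul, init_single_castSucc, init_zero, hlast,
        mul_assoc] using h2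

lemma Phi_integrable (h : IsFam P) (hb : KerBd d Set.univ P) (j : Jx m)
    (z : Eu (m + 1) × Eu (m + 1)) : Integrable (Phi P j z) := by
  obtain ⟨B, _, hB⟩ := Phi_dom hb j
  exact (integrable_inv_one_add_sq.const_mul (B z)).mono'
    ((Phi_continuous h j).comp (by fun_prop : Continuous fun t : ℝ => (z, t))).aestronglyMeasurable
    (Eventually.of_forall (hB z))

lemma AF_continuous (h : IsFam P) (hb : KerBd d Set.univ P) (j : Jx m) : Continuous (AF P j) := by
  obtain ⟨B, hBc, hB⟩ := Phi_dom hb j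
  rw [continuous_iff_continuousAt]
  intro z
  have hev : ∀ᶠ y in 𝓝 z, B y < B z + 1 :=
    hBc.continuousAt.eventually_lt_const (by linarith)
  refine continuousAt_of_dominated (bound := fun t => (B z + 1) * (1 + t ^ 2)⁻¹)
    (Eventually.of_forall fun y => (Phi_integrable h hb j y).1) ?_
    (integrable_inv_one_add_sq.const_mul _) (Eventually.of_forall fun t => ?_)
  · filter_upwards [hev] with y hy
    refine Eventually.of_forall fun t => (hB y t).trans ?_
    gcongr
  · exact ((Phi_continuous h j).comp
      (by fun_prop : Continuous fun y : Eu (m + 1) × Eu (m + 1) => (y, t))).continuousAt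

/-- Differentiation under the integral sign. -/
lemma AF_hasDerivAt (h : IsFam P) (hb : KerBd d Set.univ P) (j : Jx m) (v : Bool × Fin (m + 1))
    (z : Eu (m + 1) × Eu (m + 1)) :
    HasDerivAt (fun s : ℝ => AF P j (z + s • bs v)) (AF P (nxJ v j) z) 0 := by
  obtain ⟨B, hBc, hB⟩ := Phi_dom hb (nxJ v j)
  have hline : Continuous fun s : ℝ => B (z + s • bs v) := hBc.comp (by fun_prop)
  have hev : ∀ᶠ s : ℝ in 𝓝 0, B (z + s • bs v) < B z + 1 :=
    hline.continuousAt.eventually_lt_const (by simp)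
  have := (hasDerivAt_integral_of_dominated_loc_of_deriv_le (𝕜 := ℝ) (μ := volume)
    (F := fun s t => Phi P j (z + s • bs v) t) (F' := fun s t => Phi P (nxJ v j) (z + s • bs v) t)
    (x₀ := 0) (bound := fun t => (B z + 1) * (1 + t ^ 2)⁻¹) hev
    (Eventually.of_forall fun s => (Phi_integrable h hb j _).1) (Phi_integrable h hb j _)
    (Phi_integrable h hb _ _).1
    (Eventually.of_forall fun t s hs => (hB _ t).trans
      (mul_le_mul_of_nonneg_right (le_of_lt hs) (by positivity)))
    (integrable_inv_one_add_sq.const_mul _)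
    (Eventually.of_forall fun t s _ => hasDerivAt_line_shift (F := fun z => Phi P j z t)
      (Phi_hasDerivAt h j v (z + s • bs v) t))).2
  simpa [AF] using this

lemma AF_contDiff (h : IsFam P) (hb : KerBd d Set.univ P) (j : Jx m) :
    ContDiff ℝ (⊤ : ℕ∞) (AF P j) := by
  refine contDiff_family (bs (m := m)) (fun v => match v with
    | (false, i) => (ContinuousLinearMap.proj i).comp (ContinuousLinearMap.fst ℝ _ _)
    | (true, i) => (ContinuousLinearMap.proj i).comp (ContinuousLinearMap.snd ℝ _ _))
    ?_ (AF P) nxJ (AF_continuous h hb) (fun j v z => AF_hasDerivAt h hb j v z) j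
  rintro ⟨x, ξ⟩
  rw [Fintype.sum_prod_type, Fintype.sum_bool]
  ext i <;> simp [bs, Prod.fst_sum, Prod.snd_sum, Finset.sum_apply, Pi.single_apply]

/-- The index reached from `j` by `α` derivatives in `ξ` (`b = true`) or `x` (`b = false`). -/
def goJ (b : Bool) (α : Fin (m + 1) → ℕ) (j : Jx m) : Jx m :=
  (List.finRange (m + 1)).foldr (fun i q => (nxJ (b, i))^[α i] q) j

lemma symD_AF (h : IsFam P) (hb : KerBd d Set.univ P) (α β : Fin (m + 1) → ℕ) (j : Jx m)
    (x ξ : Eu (m + 1)) : symD α β (fun x ξ => AF P j (x, ξ)) x ξ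
      = (-Complex.I) ^ degS β * ((-Complex.I) ^ degS α * AF P (goJ false β (goJ true α j)) (x, ξ)) := by
  have h1 : ∀ y, mDeriv α (fun ξ => AF P j (y, ξ)) = fun ξ => AF P (goJ true α j) (y, ξ) := by
    intro y
    refine mDeriv_family (fun j ξ => AF P j (y, ξ)) (fun i => nxJ (true, i)) (fun i j => ?_) α j
    funext ξ
    refine cDeriv_eq_of_line _ _ _ _ ?_
    simpa [bs] using AF_hasDerivAt h hb j (true, i) (y, ξ)
  have h2 := mDeriv_family (fun j x => (-Complex.I) ^ degS α * AF P j (x, ξ))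
    (fun i => nxJ (false, i)) (fun i j => ?_) β (goJ true α j)
  · simp only [symD, mD, h1]
    exact congrArg _ (congrFun h2 x)
  · funext x
    refine cDeriv_eq_of_line _ _ _ _ ?_
    have := (AF_hasDerivAt h hb j (false, i) (x, ξ)).const_mul ((-Complex.I) ^ degS α)
    simpa [bs] using this

/-- After `∂_x^β ∂_ξ^α` there are `|α|` derivatives in `ξ` in total, and none in `t`. -/
lemma goJ_deg (α β : Fin (m + 1) → ℕ) :
    (goJ false β (goJ true α (0, 0, []))).2.1 + nxi (goJ false β (goJ true α ((0, 0, []) : Jx m))).2.2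
      = degS α ∧ nt (goJ false β (goJ true α ((0, 0, []) : Jx m))).2.2 = 0 := by
  constructor
  · have h1 := foldr_measure (fun i : Fin (m + 1) => nxJ (false, i))
      (fun j : Jx m => j.2.1 + nxi j.2.2) (fun _ => 0)
      (fun i j => by refine Fin.lastCases ?_ (fun i => ?_) i <;> simp [nxJ, nxi]) β
      (goJ true α (0, 0, []))
    have h2 := foldr_measure (fun i : Fin (m + 1) => nxJ (true, i))
      (fun j : Jx m => j.2.1 + nxi j.2.2) (fun _ => 1)
      (fun i j => by refine Fin.lastCases ?_ (fun i => ?_) i <;> simp [nxJ, nxi] <;> omega) α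
      (0, 0, [])
    simp only [goJ] at *
    rw [h1, h2]
    simp [nxi, degS]
  · have h1 := foldr_measure (fun i : Fin (m + 1) => nxJ (false, i))
      (fun j : Jx m => nt j.2.2) (fun _ => 0)
      (fun i j => by refine Fin.lastCases ?_ (fun i => ?_) i <;> simp [nxJ, nt]) β
      (goJ true α (0, 0, []))
    have h2 := foldr_measure (fun i : Fin (m + 1) => nxJ (true, i))
      (fun j : Jx m => nt j.2.2) (fun _ => 0)
      (fun i j => by refine Fin.lastCases ?_ (fun i => ?_) i <;> simp [nxJ, nt]) α
      (0, 0, [])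
    simp only [goJ] at *
    rw [h1, h2]
    simp [nt]

lemma AF_eq (j : Jx m) (z : Eu (m + 1) × Eu (m + 1)) : AF P j z =
    if j.1 = 0 then Ak P j.2.1 j.2.2 (Fin.init z.1) (Fin.init z.2) (z.2 (Fin.last m)) else 0 := by
  unfold AF Phi Ak
  split_ifs <;> simp

lemma AF_isSymbol (h : IsFam P) (hb : KerBd d Set.univ P) :
    IsSymbol (d - 1) (fun x ξ => AF P (0, 0, []) (x, ξ)) := by
  refine ⟨AF_contDiff h hb _, fun α β => ?_⟩
  set j := goJ false β (goJ true α ((0, 0, []) : Jx m)) with hj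
  obtain ⟨hd1, hd2⟩ := goJ_deg α β
  rw [← hj] at hd1 hd2
  obtain ⟨C, hC, hA⟩ := Ak_symbol h hb j.2.1 j.2.2
  refine ⟨C, fun x ξ => ?_⟩
  rw [symD_AF h hb, ← hj, norm_mul, norm_mul, norm_pow, norm_pow, norm_neg, Complex.norm_I,
    one_pow, one_pow, one_mul, one_mul, AF_eq]
  split_ifs
  · refine (hA (Fin.init x) ξ).trans (le_of_eq ?_)
    rw [hd2, ← hd1]
    congr 2
    push_cast
    ring
  · have := jap_pos ξ
    rw [norm_zero]
    positivity

/-! ### The transmission condition -/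

/-- The Schwartz seminorms of the weighted kernel are bounded uniformly in `x'`. -/
lemma gk_deriv_bound (h : IsFam P) (hb : KerBd d Set.univ P) (n : ℕ) : ∀ (l q : ℕ)
    (w : List (Dr m)) (ξ' : Eu m), ∃ C : ℝ, ∀ (x' : Eu m) (t : ℝ),
      |t| ^ l * ‖iteratedDeriv n (gk P q w x' ξ') t‖ ≤ C := by
  induction n with
  | zero =>
    intro l q w ξ'
    obtain ⟨C, _, hC⟩ := hb w (l + q)
    refine ⟨C * jap ξ' ^ (d - nxi w - ((l + q : ℕ) : ℝ) + nt w), fun x' t => ?_⟩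
    rw [iteratedDeriv_zero, norm_gk, ← mul_assoc, ← pow_add]
    exact hC ((x', t), ξ') trivial
  | succ n ih =>
    intro l q w ξ'
    obtain ⟨C1, h1⟩ := ih l (q - 1) w ξ'
    obtain ⟨C2, h2⟩ := ih l q (none :: w) ξ'
    refine ⟨q * C1 + C2, fun x' t => ?_⟩
    have hde : deriv (gk P q w x' ξ') = fun t =>
        (-(Complex.I * q)) * gk P (q - 1) w x' ξ' t + gk P q (none :: w) x' ξ' t :=
      funext fun t => (gk_hasDerivAt h q w x' ξ' t).deriv
    have hs := fun q w => ((gk_contDiff h q w x' ξ').of_le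
      (by exact_mod_cast le_top : ((n : ℕ∞) : WithTop ℕ∞) ≤ ((⊤ : ℕ∞) : WithTop ℕ∞))).contDiffAt
        (x := t)
    rw [iteratedDeriv_succ', hde, iteratedDeriv_fun_add (contDiffAt_const.mul (hs _ _)) (hs _ _),
      iteratedDeriv_const_mul_field]
    have hn : ‖-(Complex.I * (q : ℂ))‖ = q := by simp
    calc _ ≤ |t| ^ l * (q * ‖iteratedDeriv n (gk P (q - 1) w x' ξ') t‖
          + ‖iteratedDeriv n (gk P q (none :: w) x' ξ') t‖) := by
          gcongr
          refine (norm_add_le _ _).trans (le_of_eq ?_)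
          rw [norm_mul, hn]
      _ = q * (|t| ^ l * ‖iteratedDeriv n (gk P (q - 1) w x' ξ') t‖)
          + |t| ^ l * ‖iteratedDeriv n (gk P q (none :: w) x' ξ') t‖ := by ring
      _ ≤ _ := add_le_add (mul_le_mul_of_nonneg_left (h1 x' t) (by positivity)) (h2 x' t)

lemma gk_schwartz (h : IsFam P) (hb : KerBd d Set.univ P) (q : ℕ) (w : List (Dr m))
    (x' ξ' : Eu m) : ∃ S : SchwartzMap ℝ ℂ, ∀ t, S t = gk P q w x' ξ' t :=
  ⟨⟨gk P q w x' ξ', gk_contDiff h q w x' ξ', fun l n => by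
    obtain ⟨C, hC⟩ := gk_deriv_bound h hb n l q w ξ'
    refine ⟨C, fun t => ?_⟩
    rw [norm_iteratedFDeriv_eq_norm_iteratedDeriv, Real.norm_eq_abs]
    exact hC x' t⟩, fun _ => rfl⟩

/-- The kernel in the transmission condition is a multiple of the weighted kernel, by Fourier
inversion. -/
lemma AF_hasUTTC (h : IsFam P) (hb : KerBd d Set.univ P) :
    HasUTTC (fun x ξ => AF P (0, 0, []) (x, ξ)) := by
  intro α β
  set j := goJ false β (goJ true α ((0, 0, []) : Jx m)) with hj
  set c : ℂ := if j.1 = 0 then (-Complex.I) ^ degS β * (-Complex.I) ^ degS α else 0 with hc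
  have hsym : ∀ (x' ξ' : Eu m) (τ : ℝ),
      symD α β (fun x ξ => AF P (0, 0, []) (x, ξ)) (Fin.snoc x' 0) (Fin.snoc ξ' τ)
        = c * Ak P j.2.1 j.2.2 x' ξ' τ := by
    intro x' ξ' τ
    rw [symD_AF h hb, ← hj, AF_eq, hc]
    have e1 : (Fin.init (Fin.snoc x' 0 : Eu (m + 1)) : Eu m) = x' := Fin.init_snoc _ _
    have e2 : (Fin.init (Fin.snoc ξ' τ : Eu (m + 1)) : Eu m) = ξ' := Fin.init_snoc _ _
    have e3 : (Fin.snoc ξ' τ : Eu (m + 1)) (Fin.last m) = τ := Fin.snoc_last _ _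
    simp only [e1, e2, e3]
    split_ifs <;> ring
  refine ⟨fun x' t ξ' => c * gk P j.2.1 j.2.2 x' ξ' t, ⟨fun x' ξ' =>
    (contDiff_const.mul (gk_contDiff h _ _ x' ξ')).contDiffOn, fun x' ξ' φ hφ hφc _ => ?_⟩,
    fun l mm ξ' => ?_⟩
  · obtain ⟨S, hS⟩ := gk_schwartz h hb j.2.1 j.2.2 x' ξ'
    have key := integral_pF1_mul_pFinv1 S (hφc.toSchwartzMap hφ)
    rw [show (⇑(hφc.toSchwartzMap hφ) : ℝ → ℂ) = φ from rfl] at key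
    simp only [hsym, mul_assoc, integral_const_mul]
    congr 1
    simpa [hS, Ak] using key
  · obtain ⟨C, hC⟩ := gk_deriv_bound h hb mm l j.2.1 j.2.2 ξ'
    refine ⟨‖c‖ * C, fun x' t _ => ?_⟩
    rw [iteratedDeriv_const_mul_field, norm_mul, norm_mul, norm_pow, Complex.norm_real,
      Real.norm_eq_abs, mul_left_comm]
    gcongr
    exact hC x' t

end

/-- Seeley extension of a Poisson symbol-kernel, and the resulting symbol
satisfies the uniform two-sided transmission condition. -/
theorem statement_11 (m : ℕ) (hm : 1 ≤ m) (d : ℝ)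
    (k : Eu m → ℝ → Eu m → ℂ) (hk : InPK (d - 1) k) :
    ∃ pt : Eu m → ℝ → Eu m → ℂ,
      ContDiff ℝ (⊤ : ℕ∞) (fun z : (Eu m × ℝ) × Eu m => pt z.1.1 z.1.2 z.2) ∧
      (∀ (x' : Eu m) (t : ℝ) (ξ' : Eu m), 0 ≤ t → pt x' t ξ' = k x' t ξ') ∧
      (∀ x' ξ' : Eu m, ∃ S : SchwartzMap ℝ ℂ, ∀ t, S t = pt x' t ξ') ∧
      IsSymbol (d - 1)
        (fun x ξ => ∫ t : ℝ,
          Complex.exp (-(Complex.I * ((t * ξ (Fin.last m) : ℝ) : ℂ))) *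
            pt (Fin.init x) t (Fin.init ξ)) ∧
      HasUTTC
        (fun x ξ => ∫ t : ℝ,
          Complex.exp (-(Complex.I * ((t * ξ (Fin.last m) : ℝ) : ℂ))) *
            pt (Fin.init x) t (Fin.init ξ)) := by
  obtain ⟨P, hc, hd, hb, hP⟩ := exists_ext hk
  have h : IsFam P := ⟨hc, hd⟩
  have hA : (fun x ξ => AF P (0, 0, []) (x, ξ)) = fun (x ξ : Eu (m + 1)) => ∫ t : ℝ,
      Complex.exp (-(Complex.I * ((t * ξ (Fin.last m) : ℝ) : ℂ))) *
        P [] ((Fin.init x, t), Fin.init ξ) := by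
    funext x ξ
    simp [AF, Phi, gk]
  refine ⟨fun x' t ξ' => P [] ((x', t), ξ'), h.contDiff [], fun x' t ξ' ht => hP _ ht,
    fun x' ξ' => ?_, ?_, ?_⟩
  · obtain ⟨S, hS⟩ := gk_schwartz h hb 0 [] x' ξ'
    exact ⟨S, fun t => by simp [hS, gk]⟩
  · rw [← hA]; exact AF_isSymbol h hb
  · rw [← hA]; exact AF_hasUTTC h hb

end
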